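/- arXiv:1310.5829 — 3 statements merged into one kernel-verified Lean document; each statement's English description precedes it below -/
import Mathlib

section
/- The set M₂ is I-dense in M₃: for every (μ,Q) ∈ M₃ with I(μ,Q) < +∞ there exists a sequence {(μ_n,Q_n)} ⊂ M₂ such that (μ_n,Q_n) → (μ,Q) and I(μ_n,Q_n) → I(μ,Q). -/
open MeasureTheory ProbabilityTheory Filter Topology Set ENNReal

noncomputable section

/-- The data of transition rates `c(x,dy) = r(x) p(x,y) λ(dy)` on a state space `E`,
satisfying Assumption 1.1 (i)-(iii): `r` is continuous and nonnegative, `λ` is a probability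
measure which is strictly positive on open sets, `p` is a strictly positive continuous
transition density, and `1/r` is `λ`-integrable. -/
structure ChainSetting (E : Type*) [MeasurableSpace E] [TopologicalSpace E] where
  r : E → ℝ
  r_cont : Continuous r
  r_nonneg : ∀ x, 0 ≤ r x
  lam : Measure E
  lam_prob : IsProbabilityMeasure lam
  lam_pos : ∀ U : Set E, IsOpen U → U.Nonempty → 0 < lam U
  p : E → E → ℝ
  p_cont : Continuous fun z : E × E => p z.1 z.2
  p_pos : ∀ x y, 0 < p x y
  p_int : ∀ x, ∫ y, p x y ∂lam = 1
  inv_r_int : ∫⁻ x, (ENNReal.ofReal (r x))⁻¹ ∂lam ≠ ∞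

namespace ChainSetting

variable {E : Type*} [MeasurableSpace E] [TopologicalSpace E] (S : ChainSetting E)

/-- The (closed) set `E₀ = {x : r(x) = 0}` of absorbing states. -/
def E0 : Set E := {x | S.r x = 0}

/-- The skeleton transition probability `p(x,dy) = p(x,y) λ(dy)`. -/
def skel (x : E) : Measure E := S.lam.withDensity fun y => ENNReal.ofReal (S.p x y)

/-- The jump rates `c(x,dy) = r(x) p(x,y) λ(dy)`. -/
def cMeas (x : E) : Measure E := S.lam.withDensity fun y => ENNReal.ofReal (S.r x * S.p x y)

/-- The measure `μ(dx) c(x,dy)` on `E × E`. -/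
def muc (μ : Measure E) : Measure (E × E) :=
  (μ.prod S.lam).withDensity fun z => ENNReal.ofReal (S.r z.1 * S.p z.1 z.2)

/-- The invariant probability `π(dx) = π₀(1/r)⁻¹ π₀(dx)/r(x)` of the continuous-time chain,
built from the invariant probability `π₀` of the skeleton, cf. (1.2). -/
def piMeas (π₀ : Measure E) : Measure E :=
  (∫⁻ x, (ENNReal.ofReal (S.r x))⁻¹ ∂π₀)⁻¹ •
    π₀.withDensity fun x => (ENNReal.ofReal (S.r x))⁻¹

/-- Assumption 1.1 (iv): with `A_δ = {r < δ}`, there is a sequence `δ_n → 0` with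
`λ(A_{2δ_n}) ≤ C λ(A_{2δ_n} \ A_{δ_n})`. -/
def CondIV : Prop :=
  ∃ δ : ℕ → ℝ, (∀ n, 0 < δ n) ∧ Tendsto δ atTop (𝓝 0) ∧
    ∃ C : ℝ≥0∞, C ≠ ∞ ∧ ∀ n,
      S.lam {x | S.r x < 2 * δ n} ≤ C * S.lam ({x | S.r x < 2 * δ n} \ {x | S.r x < δ n})

end ChainSetting

/-- The convex function `Ψ(a) = a log a - (a - 1)` (with `Ψ(0) = 1`), extended to `ℝ≥0∞`. -/
def PsiE (a : ℝ≥0∞) : ℝ≥0∞ :=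
  if a = ∞ then ∞ else ENNReal.ofReal (a.toReal * Real.log a.toReal - a.toReal + 1)

open Classical in
/-- The joint rate functional `I(μ,Q)` of (2.3):
`I(μ,Q) = ∫∫ μ(dx)c(x,dy) Ψ(dQ/(μ(dx)c(x,dy)))` if the two marginals of `Q` coincide and
`Q ≪ μ(dx)c(x,dy)`, and `+∞` otherwise. -/
def ChainSetting.rateI0 {E : Type*} [MeasurableSpace E] [TopologicalSpace E]
    (S : ChainSetting E) (μ : Measure E) (Q : Measure (E × E)) : ℝ≥0∞ :=
  if Q.fst = Q.snd ∧ Q ≪ S.muc μ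
  then ∫⁻ z, PsiE (Q.rnDeriv (S.muc μ) z) ∂(S.muc μ)
  else ∞

/-- The joint rate functional `I` on `M₁(E) × M₊(E×E)`. -/
def ChainSetting.rateI {E : Type*} [MeasurableSpace E] [TopologicalSpace E]
    (S : ChainSetting E) (q : ProbabilityMeasure E × FiniteMeasure (E × E)) : ℝ≥0∞ :=
  S.rateI0 (q.1 : Measure E) (q.2 : Measure (E × E))

/-- The (topological) support of a measure: points all of whose open neighbourhoods have
positive measure. -/
def msupp {α : Type*} [TopologicalSpace α] {m : MeasurableSpace α} (μ : Measure α) : Set α :=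
  {x | ∀ U : Set α, IsOpen U → x ∈ U → 0 < μ U}

open Classical in
/-- Bundle a measure as a probability measure (junk value if it is not one). -/
def toPM {α : Type*} [MeasurableSpace α] [Nonempty α] (μ : Measure α) : ProbabilityMeasure α :=
  if h : IsProbabilityMeasure μ then ⟨μ, h⟩
  else ⟨Measure.dirac (Classical.arbitrary α), by infer_instance⟩

open Classical in
/-- Bundle a measure as a finite measure (junk value if it is not one). -/
def toFM {α : Type*} [MeasurableSpace α] (μ : Measure α) : FiniteMeasure α :=
  if h : IsFiniteMeasure μ then ⟨μ, h⟩ else 0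

/-- Membership in the set `M₂` of (5.8): `K = supp μ ⊆ E \\ E₀`, `supp Q = K × K`,
`μ ≪ λ` and `Q ≪ λ×λ`. -/
def ChainSetting.MemM2 {E : Type*} [MeasurableSpace E] [TopologicalSpace E]
    (S : ChainSetting E) (μ : Measure E) (Q : Measure (E × E)) : Prop :=
  msupp μ ⊆ S.E0ᶜ ∧ msupp Q = msupp μ ×ˢ msupp μ ∧
  μ ≪ S.lam ∧ Q ≪ S.lam.prod S.lam

/-- Membership in the set `M₃` of (5.9): `μ ≪ λ` and `Q ≪ λ×λ`. -/
def ChainSetting.MemM3 {E : Type*} [MeasurableSpace E] [TopologicalSpace E]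
    (S : ChainSetting E) (μ : Measure E) (Q : Measure (E × E)) : Prop :=
  μ ≪ S.lam ∧ Q ≪ S.lam.prod S.lam


/-! ### The perspective function -/

/-- The perspective of `PsiE`. -/
def PhiE (a b : ℝ≥0∞) : ℝ≥0∞ := b * PsiE (a / b)

lemma PsiE_of_ne {a : ℝ≥0∞} (ha : a ≠ ∞) :
    PsiE a = ENNReal.ofReal (a.toReal * Real.log a.toReal - a.toReal + 1) := by
  simp [PsiE, ha]

lemma PsiE_zero : PsiE 0 = 1 := by simp [PsiE]

lemma measurable_PsiE : Measurable PsiE := by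
  unfold PsiE
  refine Measurable.ite (measurableSet_singleton _) measurable_const ?_
  fun_prop

lemma PhiE_b_zero (a : ℝ≥0∞) : PhiE a 0 = 0 := by simp [PhiE]

lemma PhiE_a_zero (b : ℝ≥0∞) : PhiE 0 b = b := by simp [PhiE, PsiE_zero]

lemma measurable_PhiE {α : Type*} [MeasurableSpace α] {u v : α → ℝ≥0∞} (hu : Measurable u)
    (hv : Measurable v) : Measurable fun x => PhiE (u x) (v x) := by
  unfold PhiE
  exact hv.mul (measurable_PsiE.comp (hu.div hv))

lemma psi_real_nonneg {s : ℝ} (hs : 0 ≤ s) : 0 ≤ s * Real.log s - s + 1 := by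
  have := InformationTheory.klFun_nonneg hs
  rw [InformationTheory.klFun_apply] at this
  linarith

lemma PhiE_ofReal {a b : ℝ} (ha : 0 ≤ a) (hb : 0 < b) :
    PhiE (ENNReal.ofReal a) (ENNReal.ofReal b)
      = ENNReal.ofReal (a * Real.log (a / b) - a + b) := by
  unfold PhiE
  rw [← ENNReal.ofReal_div_of_pos hb, PsiE_of_ne ENNReal.ofReal_ne_top,
    ENNReal.toReal_ofReal (by positivity), ← ENNReal.ofReal_mul hb.le]
  congr 1
  field_simp

lemma phi_real_nonneg {a b : ℝ} (ha : 0 ≤ a) (hb : 0 < b) :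
    0 ≤ a * Real.log (a / b) - a + b := by
  have := mul_nonneg hb.le (psi_real_nonneg (s := a / b) (by positivity))
  calc _ ≤ _ := this
    _ = _ := by field_simp

/-- Tangent inequality in reals. -/
lemma tangent_real {a b t : ℝ} (ha : 0 ≤ a) (hb : 0 < b) (ht : 0 < t) :
    a * Real.log t + b ≤ (a * Real.log (a / b) - a + b) + b * t := by
  rcases ha.eq_or_lt with rfl | ha
  · simp; positivity
  have h := phi_real_nonneg (b := b * t) ha.le (by positivity)
  rw [Real.log_div ha.ne' (by positivity), Real.log_mul hb.ne' ht.ne'] at h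
  rw [Real.log_div ha.ne' hb.ne']
  nlinarith

lemma tangent_E {a b : ℝ≥0∞} (hab : b = 0 → a = 0) {t : ℝ} (ht : 0 < t) :
    a * ENNReal.ofReal (Real.log t) + b
      ≤ PhiE a b + (a * ENNReal.ofReal (-Real.log t) + b * ENNReal.ofReal t) := by
  by_cases hb : b = 0
  · simp [hb, hab hb]
  by_cases hbt : b = ∞
  · have : (b * ENNReal.ofReal t) = ∞ := by
      rw [hbt, ENNReal.top_mul]; simpa using ht
    simp [this]
  by_cases hat : a = ∞
  · have : PhiE a b = ∞ := by
      simp [PhiE, hat, ENNReal.top_div_of_ne_top hbt, PsiE, hb]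
    simp [this]
  obtain ⟨a', ha', rfl⟩ : ∃ a' : ℝ, 0 ≤ a' ∧ a = ENNReal.ofReal a' :=
    ⟨a.toReal, ENNReal.toReal_nonneg, (ENNReal.ofReal_toReal hat).symm⟩
  obtain ⟨b', hb', rfl⟩ : ∃ b' : ℝ, 0 < b' ∧ b = ENNReal.ofReal b' :=
    ⟨b.toReal, ENNReal.toReal_pos hb hbt, (ENNReal.ofReal_toReal hbt).symm⟩
  rw [PhiE_ofReal ha' hb']
  have key := tangent_real ha' hb' ht
  have hn := phi_real_nonneg ha' hb'
  rcases le_total 0 (Real.log t) with hl | hl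
  · rw [ENNReal.ofReal_of_nonpos (by linarith : -Real.log t ≤ 0), mul_zero, zero_add,
      ← ENNReal.ofReal_mul ha', ← ENNReal.ofReal_mul hb'.le,
      ← ENNReal.ofReal_add (by positivity) hb'.le, ← ENNReal.ofReal_add hn (by positivity)]
    exact ENNReal.ofReal_le_ofReal key
  · rw [ENNReal.ofReal_of_nonpos hl, mul_zero, zero_add,
      ← ENNReal.ofReal_mul ha', ← ENNReal.ofReal_mul hb'.le,
      ← ENNReal.ofReal_add (mul_nonneg ha' (by linarith)) (by positivity),
      ← ENNReal.ofReal_add hn (add_nonneg (mul_nonneg ha' (by linarith)) (by positivity))]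
    exact ENNReal.ofReal_le_ofReal (by linarith)

lemma tangent_eq {a b : ℝ≥0∞} (ha : a ≠ 0) (hat : a ≠ ∞) (hb : b ≠ 0) (hbt : b ≠ ∞) :
    ∃ t : ℝ, 0 < t ∧ 
    PhiE a b + (a * ENNReal.ofReal (-Real.log t) + b * ENNReal.ofReal t) =
      a * ENNReal.ofReal (Real.log t) + b := by
  obtain ⟨a', ha', rfl⟩ : ∃ a' : ℝ, 0 < a' ∧ a = ENNReal.ofReal a' :=
    ⟨a.toReal, ENNReal.toReal_pos ha hat, (ENNReal.ofReal_toReal hat).symm⟩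
  obtain ⟨b', hb', rfl⟩ : ∃ b' : ℝ, 0 < b' ∧ b = ENNReal.ofReal b' :=
    ⟨b.toReal, ENNReal.toReal_pos hb hbt, (ENNReal.ofReal_toReal hbt).symm⟩
  refine ⟨a' / b', by positivity, ?_⟩
  rw [PhiE_ofReal ha'.le hb']
  have hn := phi_real_nonneg ha'.le hb'
  have e : b' * (a' / b') = a' := by field_simp
  rcases le_total 0 (Real.log (a' / b')) with hl | hl
  · rw [ENNReal.ofReal_of_nonpos (by linarith : -Real.log (a' / b') ≤ 0), mul_zero, zero_add,
      ← ENNReal.ofReal_mul ha'.le, ← ENNReal.ofReal_mul hb'.le, e,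
      ← ENNReal.ofReal_add (by positivity) hb'.le, ← ENNReal.ofReal_add hn (by positivity)]
    congr 1; ring
  · rw [ENNReal.ofReal_of_nonpos hl, mul_zero, zero_add,
      ← ENNReal.ofReal_mul ha'.le, ← ENNReal.ofReal_mul hb'.le, e,
      ← ENNReal.ofReal_add (mul_nonneg ha'.le (by linarith)) (by positivity),
      ← ENNReal.ofReal_add hn (add_nonneg (mul_nonneg ha'.le (by linarith)) (by positivity))]
    congr 1; ring

/-- Jensen inequality in homogeneous form. -/
lemma jensen_Phi {α : Type*} [MeasurableSpace α] (ν : Measure α) {u v : α → ℝ≥0∞}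
    (hu : Measurable u) (hv : Measurable v) (huv : ∀ᵐ x ∂ν, v x = 0 → u x = 0)
    (hui : ∫⁻ x, u x ∂ν ≠ ∞) (hvi : ∫⁻ x, v x ∂ν ≠ ∞) :
    PhiE (∫⁻ x, u x ∂ν) (∫⁻ x, v x ∂ν) ≤ ∫⁻ x, PhiE (u x) (v x) ∂ν := by
  by_cases hV : ∫⁻ x, v x ∂ν = 0
  · rw [hV, PhiE_b_zero]; exact zero_le
  by_cases hU : ∫⁻ x, u x ∂ν = 0
  · rw [hU, PhiE_a_zero]
    rw [lintegral_eq_zero_iff hu] at hU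
    refine lintegral_mono_ae ?_
    filter_upwards [hU] with x hx
    rw [hx]; simp [PhiE_a_zero]
  obtain ⟨t, ht, hte⟩ := tangent_eq hU hui hV hvi
  have h1 : ∫⁻ x, (u x * ENNReal.ofReal (Real.log t) + v x) ∂ν ≤
      ∫⁻ x, (PhiE (u x) (v x) +
        (u x * ENNReal.ofReal (-Real.log t) + v x * ENNReal.ofReal t)) ∂ν := by
    refine lintegral_mono_ae ?_
    filter_upwards [huv] with x hx
    exact tangent_E hx ht
  rw [lintegral_add_left (hu.mul_const _), lintegral_add_left (measurable_PhiE hu hv),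
    lintegral_add_left (hu.mul_const _), lintegral_mul_const _ hu, lintegral_mul_const _ hu,
    lintegral_mul_const _ hv, ← hte] at h1
  refine (ENNReal.add_le_add_iff_right ?_).1 h1
  exact ENNReal.add_ne_top.2 ⟨ENNReal.mul_ne_top hui ENNReal.ofReal_ne_top,
    ENNReal.mul_ne_top hvi ENNReal.ofReal_ne_top⟩

/-- Subadditivity. -/
lemma PhiE_add_le {a b a' b' : ℝ≥0∞} (hab : b = 0 → a = 0) (hab' : b' = 0 → a' = 0)
    (ha : a ≠ ∞) (hb : b ≠ ∞) (ha' : a' ≠ ∞) (hb' : b' ≠ ∞) :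
    PhiE (a + a') (b + b') ≤ PhiE a b + PhiE a' b' := by
  have := jensen_Phi (Measure.count (α := Bool)) (u := fun i => if i then a else a')
    (v := fun i => if i then b else b') (by fun_prop) (by fun_prop)
    (ae_of_all _ (by intro i; cases i <;> simpa)) (by simp [lintegral_count, ha, ha'])
    (by simp [lintegral_count, hb, hb'])
  simpa [lintegral_count] using this

lemma PhiE_smul {a b c : ℝ≥0∞} (hc : c ≠ 0) (hct : c ≠ ∞) :
    PhiE (c * a) (c * b) = c * PhiE a b := by
  unfold PhiE
  rw [ENNReal.mul_div_mul_left _ _ hc hct, mul_assoc]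

/-- Change of the reference weight. -/
lemma PhiE_compare {a b b' : ℝ≥0∞} {K : ℝ} (hK : 1 ≤ K) (hab : b = 0 → a = 0)
    (ha : a ≠ ∞) (hb : b ≠ ∞) (hb't : b' ≠ ∞) (hbb : b ≤ ENNReal.ofReal K * b') :
    PhiE a b' ≤ PhiE a b + (ENNReal.ofReal (Real.log K) * a + b') := by
  by_cases hb0 : b = 0
  · rw [hab hb0, PhiE_a_zero]; exact le_add_left (le_add_left le_rfl)
  have hb'0 : b' ≠ 0 := by
    rintro rfl
    simp at hbb; exact hb0 hbb
  obtain ⟨a, ha', rfl⟩ : ∃ a' : ℝ, 0 ≤ a' ∧ a = ENNReal.ofReal a' :=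
    ⟨a.toReal, ENNReal.toReal_nonneg, (ENNReal.ofReal_toReal ha).symm⟩
  obtain ⟨b, hbp, rfl⟩ : ∃ b' : ℝ, 0 < b' ∧ b = ENNReal.ofReal b' :=
    ⟨b.toReal, ENNReal.toReal_pos hb0 hb, (ENNReal.ofReal_toReal hb).symm⟩
  obtain ⟨b', hbp', rfl⟩ : ∃ c : ℝ, 0 < c ∧ b' = ENNReal.ofReal c :=
    ⟨b'.toReal, ENNReal.toReal_pos hb'0 hb't, (ENNReal.ofReal_toReal hb't).symm⟩
  have hl := Real.log_nonneg hK
  have hn := phi_real_nonneg ha' hbp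
  rw [PhiE_ofReal ha' hbp, PhiE_ofReal ha' hbp', ← ENNReal.ofReal_mul hl,
    ← ENNReal.ofReal_add (by positivity) hbp'.le, ← ENNReal.ofReal_add hn (by positivity)]
  apply ENNReal.ofReal_le_ofReal
  rw [← ENNReal.ofReal_mul (by linarith), ENNReal.ofReal_le_ofReal_iff (by positivity)] at hbb
  rcases ha'.eq_or_lt with rfl | hap
  · simp; linarith
  rw [Real.log_div hap.ne' hbp'.ne', Real.log_div hap.ne' hbp.ne']
  have := Real.log_le_log hbp hbb
  rw [Real.log_mul (by linarith) hbp'.ne'] at this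
  nlinarith

lemma PhiE_tendsto {ι : Type*} {l : Filter ι} {a b : ι → ℝ≥0∞} {a0 b0 : ℝ≥0∞}
    (ha : Tendsto a l (𝓝 a0)) (hb : Tendsto b l (𝓝 b0)) (ha0 : a0 ≠ ∞) (hb0 : b0 ≠ 0)
    (hb0t : b0 ≠ ∞) : Tendsto (fun n => PhiE (a n) (b n)) l (𝓝 (PhiE a0 b0)) := by
  have hd : Tendsto (fun n => a n / b n) l (𝓝 (a0 / b0)) :=
    ENNReal.Tendsto.div ha (Or.inr hb0) hb (Or.inr ha0)
  have hd0 : a0 / b0 ≠ ∞ := ENNReal.div_ne_top ha0 hb0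
  have hP : Tendsto (fun n => PsiE (a n / b n)) l (𝓝 (PsiE (a0 / b0))) := by
    have h1 : Tendsto (fun n => (a n / b n).toReal) l (𝓝 (a0 / b0).toReal) :=
      (ENNReal.tendsto_toReal hd0).comp hd
    rw [PsiE_of_ne hd0]
    have hc : Continuous fun s : ℝ => ENNReal.ofReal (s * Real.log s - s + 1) := by
      have := Real.continuous_mul_log
      exact ENNReal.continuous_ofReal.comp (by fun_prop)
    refine ((hc.tendsto _).comp h1).congr' ?_
    filter_upwards [hd.eventually_ne hd0] with n hn
    rw [PsiE_of_ne hn]; rfl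
  unfold PhiE
  refine ENNReal.Tendsto.mul hb (Or.inl hb0) hP (Or.inr hb0t)

lemma PhiE_le_liminf {a b : ℕ → ℝ≥0∞} {a0 b0 : ℝ≥0∞}
    (ha : Tendsto a atTop (𝓝 a0)) (hb : Tendsto b atTop (𝓝 b0)) (ha0 : a0 ≠ ∞)
    (hb0t : b0 ≠ ∞) : PhiE a0 b0 ≤ liminf (fun n => PhiE (a n) (b n)) atTop := by
  by_cases hb0 : b0 = 0
  · rw [hb0, PhiE_b_zero]; exact zero_le
  · rw [(PhiE_tendsto ha hb ha0 hb0 hb0t).liminf_eq]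

/-! ### The collapsing operator -/

section collapse

variable {X Y : Type*} [MeasurableSpace X] [MeasurableSpace Y]

/-- Mass in `A` is spread uniformly over `B`; on the complement of `A` nothing changes. -/
def TT (lam : Measure X) (A B : Set X) (u : X → ℝ≥0∞) (x : X) : ℝ≥0∞ :=
  Aᶜ.indicator u x + B.indicator (fun _ => (∫⁻ x' in A, u x' ∂lam) / lam B) x

lemma TT_notMem {lam : Measure X} {A B : Set X} (hBA : B ⊆ A) {u : X → ℝ≥0∞} {x : X}
    (hx : x ∉ A) : TT lam A B u x = u x := by
  have : x ∉ B := fun h => hx (hBA h)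
  simp [TT, hx, this]

lemma TT_mem {lam : Measure X} {A B : Set X} (hBA : B ⊆ A) {u : X → ℝ≥0∞} {x : X}
    (hx : x ∈ B) : TT lam A B u x = (∫⁻ x' in A, u x' ∂lam) / lam B := by
  have : x ∈ A := hBA hx
  simp [TT, hx, this]

lemma TT_mem_diff {lam : Measure X} {A B : Set X} {u : X → ℝ≥0∞} {x : X}
    (hx : x ∈ A) (hxB : x ∉ B) : TT lam A B u x = 0 := by
  simp [TT, hx, hxB]

lemma TT_zero (lam : Measure X) (A B : Set X) (x : X) :
    TT lam A B (fun _ => 0) x = 0 := by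
  simp [TT]

lemma TT_mono {lam : Measure X} {A B : Set X} {u v : X → ℝ≥0∞} (h : ∀ x, u x ≤ v x) (x : X) :
    TT lam A B u x ≤ TT lam A B v x := by
  unfold TT
  refine add_le_add (indicator_le_indicator (h x)) (indicator_le_indicator ?_)
  gcongr
  exact h _

lemma TT_const_mul {lam : Measure X} {A B : Set X} {u : X → ℝ≥0∞} (hu : Measurable u)
    (c : ℝ≥0∞) (x : X) : TT lam A B (fun x => c * u x) x = c * TT lam A B u x := by
  unfold TT
  rw [lintegral_const_mul _ hu, mul_add]
  by_cases h1 : x ∈ A <;> by_cases h2 : x ∈ B <;> simp [h1, h2, mul_div_assoc]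

lemma TT_congr {lam : Measure X} {A B : Set X} {u v : X → ℝ≥0∞} (h : u =ᵐ[lam] v) :
    TT lam A B u =ᵐ[lam] TT lam A B v := by
  have : ∫⁻ x' in A, u x' ∂lam = ∫⁻ x' in A, v x' ∂lam :=
    lintegral_congr_ae (ae_restrict_of_ae h)
  filter_upwards [h] with x hx
  unfold TT
  rw [this]
  congr 1
  by_cases h1 : x ∈ A <;> simp [h1, hx]

lemma measurable_TT1 {lam : Measure X} [SFinite lam] {A B : Set X} (hA : MeasurableSet A)
    (hB : MeasurableSet B) {q : X × Y → ℝ≥0∞} (hq : Measurable q) :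
    Measurable fun z : X × Y => TT lam A B (fun x => q (x, z.2)) z.1 := by
  have h1 : Measurable fun z : X × Y => (Prod.fst ⁻¹' Aᶜ : Set (X × Y)).indicator q z :=
    hq.indicator (measurable_fst hA.compl)
  have h3 : Measurable fun y : Y => (∫⁻ x' in A, q (x', y) ∂lam) / lam B :=
    (Measurable.lintegral_prod_left' (μ := lam.restrict A) hq).div_const _
  have h2 : Measurable ((Prod.fst ⁻¹' B : Set (X × Y)).indicator
      fun z => (∫⁻ x' in A, q (x', z.2) ∂lam) / lam B) :=
    (h3.comp measurable_snd).indicator (measurable_fst hB)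
  exact h1.add h2

lemma measurable_TT {lam : Measure X} {A B : Set X} (hA : MeasurableSet A)
    (hB : MeasurableSet B) {u : X → ℝ≥0∞} (hu : Measurable u) : Measurable (TT lam A B u) := by
  unfold TT
  exact (hu.indicator hA.compl).add (measurable_const.indicator hB)

lemma lintegral_TT {lam : Measure X} [IsFiniteMeasure lam] {A B : Set X} (hA : MeasurableSet A)
    (hB : MeasurableSet B) (hBA : lam B = 0 → lam A = 0) {u : X → ℝ≥0∞} (hu : Measurable u) :
    ∫⁻ x, TT lam A B u x ∂lam = ∫⁻ x, u x ∂lam := by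
  unfold TT
  rw [lintegral_add_left (hu.indicator hA.compl), lintegral_indicator hA.compl,
    lintegral_indicator hB, setLIntegral_const, ← lintegral_add_compl (μ := lam) u hA, add_comm]
  refine congrArg₂ _ ?_ rfl
  by_cases h : lam B = 0
  · rw [h, Measure.restrict_eq_zero.2 (hBA h)]; simp
  · rw [ENNReal.div_mul_cancel h (measure_ne_top _ _)]

lemma TT_pos {lam : Measure X} [IsFiniteMeasure lam] {A B : Set X} (hA : MeasurableSet A)
    (hBA : B ⊆ A) {N : Set X} (hN : lam N = 0) (hNA : N ⊆ A) (hBne : ∀ x ∈ B, lam A ≠ 0)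
    {u : X → ℝ≥0∞} (hu : Measurable u) (hpos : ∀ x ∉ N, u x ≠ 0) {x : X}
    (hx : x ∉ A ∨ x ∈ B) : TT lam A B u x ≠ 0 := by
  rcases hx with hx | hx
  · rw [TT_notMem hBA hx]; exact hpos x fun h => hx (hNA h)
  · rw [TT_mem hBA hx]
    refine (ENNReal.div_pos ?_ (measure_ne_top _ _)).ne'
    intro h0
    rw [lintegral_eq_zero_iff hu] at h0
    apply hBne x hx
    have hN' : ∀ᵐ x ∂lam.restrict A, x ∉ N := 
      ae_restrict_of_ae (measure_eq_zero_iff_ae_notMem.1 hN)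
    have : ∀ᵐ x ∂lam.restrict A, False := by
      filter_upwards [h0, hN'] with y hy hyN
      exact hpos y hyN hy
    have h2 := ae_iff.1 this
    simpa using h2

/-- One-dimensional data processing. -/
lemma jensen_TT {lam : Measure X} [IsFiniteMeasure lam] {A B : Set X} (hA : MeasurableSet A)
    (hB : MeasurableSet B) (hsub : B ⊆ A) {u v : X → ℝ≥0∞}
    (hu : Measurable u) (hv : Measurable v) (huv : ∀ᵐ x ∂lam, v x = 0 → u x = 0)
    (hui : ∫⁻ x, u x ∂lam ≠ ∞) (hvi : ∫⁻ x, v x ∂lam ≠ ∞) :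
    ∫⁻ x, PhiE (TT lam A B u x) (TT lam A B v x) ∂lam ≤ ∫⁻ x, PhiE (u x) (v x) ∂lam := by
  have hm := measurable_PhiE (measurable_TT (lam := lam) hA hB hu)
    (measurable_TT (lam := lam) hA hB hv)
  rw [← lintegral_add_compl _ hA, ← lintegral_add_compl (fun x => PhiE (u x) (v x)) hA]
  refine add_le_add ?_ ?_
  · have h1 : ∫⁻ x in A, PhiE (TT lam A B u x) (TT lam A B v x) ∂lam
        = ∫⁻ x in B, PhiE (TT lam A B u x) (TT lam A B v x) ∂lam := by
      rw [← lintegral_inter_add_sdiff _ A hB, inter_eq_self_of_subset_right hsub]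
      rw [setLIntegral_congr_fun (s := A \ B) (g := fun _ => 0) (hA.diff hB)]
      · simp
      · intro x hx
        simp only [TT_mem_diff hx.1 hx.2, PhiE_b_zero]
    rw [h1, setLIntegral_congr_fun (g := fun _ => PhiE ((∫⁻ x' in A, u x' ∂lam) / lam B)
      ((∫⁻ x' in A, v x' ∂lam) / lam B)) hB
      (fun x hx => by simp only [TT_mem hsub hx]), setLIntegral_const]
    by_cases h : lam B = 0
    · rw [h]; simp
    rw [ENNReal.div_eq_inv_mul, ENNReal.div_eq_inv_mul, PhiE_smul, mul_comm, ← mul_assoc,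
      ENNReal.mul_inv_cancel h (measure_ne_top _ _), one_mul]
    · refine jensen_Phi _ hu hv (ae_restrict_of_ae huv) ?_ ?_
      · exact ne_top_of_le_ne_top hui (setLIntegral_le_lintegral _ _)
      · exact ne_top_of_le_ne_top hvi (setLIntegral_le_lintegral _ _)
    · exact ENNReal.inv_ne_zero.2 (measure_ne_top _ _)
    · exact ENNReal.inv_ne_top.2 h
  · refine le_of_eq (setLIntegral_congr_fun hA.compl fun x hx => ?_)
    simp only [TT_notMem hsub hx]

/-- Collapse in the first variable. -/
def TT1 (lam : Measure X) (A B : Set X) (q : X × Y → ℝ≥0∞) (z : X × Y) : ℝ≥0∞ :=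
  TT lam A B (fun x => q (x, z.2)) z.1

lemma measurable_TT1' {lam : Measure X} [SFinite lam] {A B : Set X} (hA : MeasurableSet A)
    (hB : MeasurableSet B) {q : X × Y → ℝ≥0∞} (hq : Measurable q) :
    Measurable (TT1 lam A B q) := measurable_TT1 hA hB hq

/-- Collapse in the second variable. -/
def TT2 (lam : Measure Y) (A B : Set Y) (q : X × Y → ℝ≥0∞) (z : X × Y) : ℝ≥0∞ :=
  TT lam A B (fun y => q (z.1, y)) z.2

lemma measurable_TT2 {lam : Measure Y} [SFinite lam] {A B : Set Y} (hA : MeasurableSet A)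
    (hB : MeasurableSet B) {q : X × Y → ℝ≥0∞} (hq : Measurable q) :
    Measurable (TT2 lam A B q) := 
  (measurable_TT1 hA hB (hq.comp measurable_swap)).comp measurable_swap

variable {lam : Measure X} [IsFiniteMeasure lam] {A B : Set X}

lemma marg2_TT1 (hA : MeasurableSet A)
    (hB : MeasurableSet B) (hBA : lam B = 0 → lam A = 0) {q : X × X → ℝ≥0∞}
    (hq : Measurable q) (y : X) :
    ∫⁻ x, TT1 lam A B q (x, y) ∂lam = ∫⁻ x, q (x, y) ∂lam := 
  lintegral_TT hA hB hBA (hq.comp (measurable_id.prodMk measurable_const))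

lemma marg1_TT2 (hA : MeasurableSet A)
    (hB : MeasurableSet B) (hBA : lam B = 0 → lam A = 0) {q : X × X → ℝ≥0∞}
    (hq : Measurable q) (x : X) :
    ∫⁻ y, TT2 lam A B q (x, y) ∂lam = ∫⁻ y, q (x, y) ∂lam := 
  lintegral_TT hA hB hBA (hq.comp (measurable_const.prodMk measurable_id))

lemma marg1_TT1 {q : X × X → ℝ≥0∞} (hB : MeasurableSet B)
    (hA : MeasurableSet A) (hq : Measurable q) (x : X) :
    ∫⁻ y, TT1 lam A B q (x, y) ∂lam = TT lam A B (fun x => ∫⁻ y, q (x, y) ∂lam) x := by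
  unfold TT1 TT
  have hm : Measurable fun y => Aᶜ.indicator (fun x => q (x, y)) x := by
    by_cases h : x ∈ A
    · simp [h]
    · simp only [mem_compl_iff, h, not_false_eq_true, indicator_of_mem]
      exact hq.comp (measurable_const.prodMk measurable_id)
  dsimp only
  rw [lintegral_add_left hm]
  congr 1
  · by_cases h : x ∈ A <;> simp [h]
  · by_cases h : x ∈ B 
    · simp only [h, indicator_of_mem, div_eq_mul_inv]
      rw [lintegral_mul_const, lintegral_lintegral_swap]
      · exact (hq.comp measurable_swap).aemeasurable
      · exact Measurable.lintegral_prod_left' (μ := lam.restrict A) hq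
    · simp [h]

lemma marg2_TT2 {q : X × X → ℝ≥0∞} (hB : MeasurableSet B)
    (hA : MeasurableSet A) (hq : Measurable q) (y : X) :
    ∫⁻ x, TT2 lam A B q (x, y) ∂lam = TT lam A B (fun y => ∫⁻ x, q (x, y) ∂lam) y := 
  marg1_TT1 (q := q ∘ Prod.swap) hB hA (hq.comp measurable_swap) y

lemma lintegral_TT1 (hA : MeasurableSet A)
    (hB : MeasurableSet B) (hBA : lam B = 0 → lam A = 0) {q : X × X → ℝ≥0∞}
    (hq : Measurable q) :
    ∫⁻ z, TT1 lam A B q z ∂(lam.prod lam) = ∫⁻ z, q z ∂(lam.prod lam) := by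
  rw [lintegral_prod_symm' _ (measurable_TT1' hA hB hq), lintegral_prod_symm' _ hq]
  exact lintegral_congr (marg2_TT1 hA hB hBA hq)

lemma lintegral_TT2 (hA : MeasurableSet A)
    (hB : MeasurableSet B) (hBA : lam B = 0 → lam A = 0) {q : X × X → ℝ≥0∞}
    (hq : Measurable q) :
    ∫⁻ z, TT2 lam A B q z ∂(lam.prod lam) = ∫⁻ z, q z ∂(lam.prod lam) := by
  rw [lintegral_prod _ (measurable_TT2 hA hB hq).aemeasurable,
    lintegral_prod _ hq.aemeasurable]
  exact lintegral_congr (marg1_TT2 hA hB hBA hq)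

lemma marginals_TT (hA : MeasurableSet A)
    (hB : MeasurableSet B) (hBA : lam B = 0 → lam A = 0) {q : X × X → ℝ≥0∞}
    (hq : Measurable q)
    (h : (fun x => ∫⁻ y, q (x, y) ∂lam) =ᵐ[lam] fun y => ∫⁻ x, q (x, y) ∂lam) :
    (fun x => ∫⁻ y, TT2 lam A B (TT1 lam A B q) (x, y) ∂lam) =ᵐ[lam]
      fun y => ∫⁻ x, TT2 lam A B (TT1 lam A B q) (x, y) ∂lam := by
  have h1 := measurable_TT1' (lam := lam) hA hB hq
  simp only [marg1_TT2 hA hB hBA h1, marg2_TT2 hB hA h1, marg1_TT1 hB hA hq,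
    marg2_TT1 hA hB hBA hq]
  exact TT_congr h

lemma jensen_TT2 (hA : MeasurableSet A) (hB : MeasurableSet B) (hsub : B ⊆ A)
    {u v : X × X → ℝ≥0∞}
    (hu : Measurable u) (hv : Measurable v) (huv : ∀ᵐ z ∂(lam.prod lam), v z = 0 → u z = 0)
    (hui : ∫⁻ z, u z ∂(lam.prod lam) ≠ ∞) (hvi : ∫⁻ z, v z ∂(lam.prod lam) ≠ ∞) :
    ∫⁻ z, PhiE (TT2 lam A B u z) (TT2 lam A B v z) ∂(lam.prod lam)
      ≤ ∫⁻ z, PhiE (u z) (v z) ∂(lam.prod lam) := by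
  rw [lintegral_prod _ (measurable_PhiE (measurable_TT2 hA hB hu)
    (measurable_TT2 hA hB hv)).aemeasurable,
    lintegral_prod _ (measurable_PhiE hu hv).aemeasurable]
  rw [lintegral_prod _ hu.aemeasurable] at hui
  rw [lintegral_prod _ hv.aemeasurable] at hvi
  refine lintegral_mono_ae ?_
  filter_upwards [Measure.ae_ae_of_ae_prod huv, ae_lt_top hu.lintegral_prod_right' hui,
    ae_lt_top hv.lintegral_prod_right' hvi] with x h1 h2 h3
  exact jensen_TT hA hB hsub (hu.comp (measurable_const.prodMk measurable_id))
    (hv.comp (measurable_const.prodMk measurable_id)) h1 h2.ne h3.ne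

lemma jensen_TT1 (hA : MeasurableSet A) (hB : MeasurableSet B) (hsub : B ⊆ A)
    {u v : X × X → ℝ≥0∞}
    (hu : Measurable u) (hv : Measurable v) (huv : ∀ᵐ z ∂(lam.prod lam), v z = 0 → u z = 0)
    (hui : ∫⁻ z, u z ∂(lam.prod lam) ≠ ∞) (hvi : ∫⁻ z, v z ∂(lam.prod lam) ≠ ∞) :
    ∫⁻ z, PhiE (TT1 lam A B u z) (TT1 lam A B v z) ∂(lam.prod lam)
      ≤ ∫⁻ z, PhiE (u z) (v z) ∂(lam.prod lam) := by
  have sw : ∀ g : X × X → ℝ≥0∞, Measurable g →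
      ∫⁻ z, g z.swap ∂(lam.prod lam) = ∫⁻ z, g z ∂(lam.prod lam) := fun g hg => 
    lintegral_prod_swap g
  have := jensen_TT2 (lam := lam) hA hB hsub (hu.comp measurable_swap) (hv.comp measurable_swap)
    (by
      have h := huv
      rw [← Measure.prod_swap] at h
      exact ae_of_ae_map measurable_swap.aemeasurable h)
    (by simpa only [Function.comp, sw u hu] using hui)
    (by simpa only [Function.comp, sw v hv] using hvi)
  rw [← sw _ (measurable_PhiE (measurable_TT1' hA hB hu) (measurable_TT1' hA hB hv)),
    ← sw _ (measurable_PhiE hu hv)]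
  exact this

end collapse

/-! ### Scheffe-type limits -/

section limits

variable {X : Type*} [MeasurableSpace X] {ν : Measure X}

lemma scheffe_left {u : X → ℝ≥0∞} {un : ℕ → X → ℝ≥0∞} (hu : Measurable u)
    (hun : ∀ n, Measurable (un n)) (hui : ∫⁻ x, u x ∂ν ≠ ∞)
    (hlim : ∀ᵐ x ∂ν, Tendsto (fun n => un n x) atTop (𝓝 (u x))) :
    Tendsto (fun n => ∫⁻ x, (u x - un n x) ∂ν) atTop (𝓝 0) := by
  have h := tendsto_lintegral_of_dominated_convergence (μ := ν) (F := fun n x => u x - un n x)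
    (f := fun _ => 0) u (fun n => hu.sub (hun n)) (fun n => ae_of_all _ fun x => tsub_le_self)
    hui (by
      filter_upwards [hlim, ae_lt_top hu hui] with x hx hxt
      have := ENNReal.Tendsto.sub (tendsto_const_nhds (x := u x)) hx (Or.inl hxt.ne)
      simpa using this)
  simpa using h

lemma scheffe_right {u : X → ℝ≥0∞} {un : ℕ → X → ℝ≥0∞} (hu : Measurable u)
    (hun : ∀ n, Measurable (un n)) (hui : ∫⁻ x, u x ∂ν ≠ ∞)
    (hlim : ∀ᵐ x ∂ν, Tendsto (fun n => un n x) atTop (𝓝 (u x)))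
    (hint : Tendsto (fun n => ∫⁻ x, un n x ∂ν) atTop (𝓝 (∫⁻ x, u x ∂ν))) :
    Tendsto (fun n => ∫⁻ x, (un n x - u x) ∂ν) atTop (𝓝 0) := by
  have h1 := scheffe_left hu hun hui hlim
  have h2 := ENNReal.Tendsto.sub (hint.add h1) (tendsto_const_nhds (x := ∫⁻ x, u x ∂ν))
    (Or.inr hui)
  have e : ∀ n, ∫⁻ x, (un n x - u x) ∂ν =
      (∫⁻ x, un n x ∂ν + ∫⁻ x, (u x - un n x) ∂ν) - ∫⁻ x, u x ∂ν := by
    intro n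
    refine ENNReal.eq_sub_of_add_eq hui ?_
    have hs : Measurable fun x => un n x - u x := (hun n).sub hu
    rw [← lintegral_add_left hs, ← lintegral_add_left (hun n)]
    refine lintegral_congr fun x => ?_
    rw [tsub_add_eq_max, add_tsub_eq_max]
  simp only [e]
  simpa using h2

lemma strip_tendsto {u : X → ℝ≥0∞} {un : ℕ → X → ℝ≥0∞} (hu : Measurable u)
    (hun : ∀ n, Measurable (un n)) (hui : ∫⁻ x, u x ∂ν ≠ ∞)
    (hlim : ∀ᵐ x ∂ν, Tendsto (fun n => un n x) atTop (𝓝 (u x)))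
    (hint : Tendsto (fun n => ∫⁻ x, un n x ∂ν) atTop (𝓝 (∫⁻ x, u x ∂ν)))
    {s : ℕ → Set X} (hs : ∀ n, MeasurableSet (s n))
    (hsl : ∀ᵐ x ∂ν, ∀ᶠ n in atTop, x ∉ s n) :
    Tendsto (fun n => ∫⁻ x in s n, un n x ∂ν) atTop (𝓝 0) := by
  have h1 := scheffe_right hu hun hui hlim hint
  have h2 : Tendsto (fun n => ∫⁻ x, (s n).indicator u x ∂ν) atTop (𝓝 0) := by
    have h := tendsto_lintegral_of_dominated_convergence (μ := ν)
      (F := fun n x => (s n).indicator u x)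
      (f := fun _ => 0) u (fun n => hu.indicator (hs n))
      (fun n => ae_of_all _ fun x => indicator_le_self _ _ _)
      hui (by
        filter_upwards [hsl] with x hx
        refine tendsto_const_nhds.congr' ?_
        filter_upwards [hx] with n hn
        simp [hn])
    simpa using h
  have h3 := h2.add h1
  rw [add_zero] at h3
  refine tendsto_of_tendsto_of_tendsto_of_le_of_le tendsto_const_nhds h3 (fun _ => zero_le) ?_
  intro n
  dsimp only
  rw [← lintegral_indicator (hs n), ← lintegral_add_left (hu.indicator (hs n))]
  refine lintegral_mono fun x => ?_
  by_cases hx : x ∈ s n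
  · simp only [hx, indicator_of_mem]; exact le_add_tsub
  · simp [hx]

lemma weak_tendsto {u : X → ℝ≥0∞} {un : ℕ → X → ℝ≥0∞} (hu : Measurable u)
    (hun : ∀ n, Measurable (un n)) (hui : ∫⁻ x, u x ∂ν ≠ ∞)
    (hlim : ∀ᵐ x ∂ν, Tendsto (fun n => un n x) atTop (𝓝 (u x)))
    (hint : Tendsto (fun n => ∫⁻ x, un n x ∂ν) atTop (𝓝 (∫⁻ x, u x ∂ν)))
    {g : X → ℝ≥0∞} (hg : Measurable g) {M : ℝ≥0∞} (hM : M ≠ ∞) (hgM : ∀ x, g x ≤ M) :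
    Tendsto (fun n => ∫⁻ x, g x ∂(ν.withDensity (un n))) atTop
      (𝓝 (∫⁻ x, g x ∂(ν.withDensity u))) := by
  have h1 := scheffe_right hu hun hui hlim hint
  simp only [lintegral_withDensity_eq_lintegral_mul _ hu hg,
    lintegral_withDensity_eq_lintegral_mul _ (hun _) hg, Pi.mul_apply]
  refine tendsto_of_le_liminf_of_limsup_le ?_ ?_
  · refine le_trans ?_ (lintegral_liminf_le fun n => (hun n).mul hg)
    refine lintegral_mono_ae ?_
    filter_upwards [hlim] with x hx
    have : Tendsto (fun n => un n x * g x) atTop (𝓝 (u x * g x)) := 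
      ENNReal.Tendsto.mul_const hx (Or.inr (ne_top_of_le_ne_top hM (hgM x)))
    exact this.liminf_eq.ge
  · have h2 : Tendsto (fun n => ∫⁻ x, u x * g x ∂ν + M * ∫⁻ x, (un n x - u x) ∂ν) atTop
        (𝓝 (∫⁻ x, u x * g x ∂ν)) := by
      have := (ENNReal.Tendsto.const_mul h1 (Or.inr hM)).const_add (∫⁻ x, u x * g x ∂ν)
      simpa using this
    rw [← h2.limsup_eq]
    refine limsup_le_limsup (Eventually.of_forall fun n => ?_)
    dsimp only
    have hs : Measurable fun x => un n x - u x := (hun n).sub hu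
    have hug : Measurable fun x => u x * g x := hu.mul hg
    rw [← lintegral_const_mul _ hs, ← lintegral_add_left hug]
    refine lintegral_mono fun x => ?_
    calc un n x * g x ≤ (u x + (un n x - u x)) * g x := by gcongr; exact le_add_tsub
      _ = u x * g x + g x * (un n x - u x) := by ring
      _ ≤ _ := by gcongr; exact hgM x

end limits

lemma toFM_of {α : Type*} [MeasurableSpace α] {μ : Measure α} (h : IsFiniteMeasure μ) :
    toFM μ = ⟨μ, h⟩ := dif_pos h

lemma toPM_of {α : Type*} [MeasurableSpace α] [Nonempty α] {μ : Measure α}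
    (h : IsProbabilityMeasure μ) : toPM μ = ⟨μ, h⟩ := dif_pos h

lemma toFM_tendsto {X : Type*} [MeasurableSpace X] [TopologicalSpace X] [OpensMeasurableSpace X]
    {ν : Measure X} {u : X → ℝ≥0∞} {un : ℕ → X → ℝ≥0∞} (hu : Measurable u)
    (hun : ∀ n, Measurable (un n)) (hui : ∫⁻ x, u x ∂ν ≠ ∞)
    (hlim : ∀ᵐ x ∂ν, Tendsto (fun n => un n x) atTop (𝓝 (u x)))
    (hint : Tendsto (fun n => ∫⁻ x, un n x ∂ν) atTop (𝓝 (∫⁻ x, u x ∂ν)))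
    (hf : IsFiniteMeasure (ν.withDensity u)) (hfn : ∀ n, IsFiniteMeasure (ν.withDensity (un n))) :
    Tendsto (fun n => toFM (ν.withDensity (un n))) atTop (𝓝 (toFM (ν.withDensity u))) := by
  rw [FiniteMeasure.tendsto_iff_forall_lintegral_tendsto]
  intro g
  simp only [toFM_of hf, toFM_of (hfn _)]
  have hgm : Measurable fun x => (g x : ℝ≥0∞) := 
    (ENNReal.continuous_coe.comp g.continuous).measurable
  obtain ⟨M, hM⟩ : ∃ M : NNReal, ∀ x, g x ≤ M := ⟨_, g.apply_le_nndist_zero⟩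
  exact weak_tendsto hu hun hui hlim hint hgm (M := M) ENNReal.coe_ne_top 
    (fun x => by exact_mod_cast hM x)

lemma toPM_tendsto {X : Type*} [MeasurableSpace X] [TopologicalSpace X] [OpensMeasurableSpace X]
    [Nonempty X]
    {ν : Measure X} {u : X → ℝ≥0∞} {un : ℕ → X → ℝ≥0∞} (hu : Measurable u)
    (hun : ∀ n, Measurable (un n)) (hui : ∫⁻ x, u x ∂ν ≠ ∞)
    (hlim : ∀ᵐ x ∂ν, Tendsto (fun n => un n x) atTop (𝓝 (u x)))
    (hint : Tendsto (fun n => ∫⁻ x, un n x ∂ν) atTop (𝓝 (∫⁻ x, u x ∂ν)))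
    (hf : IsProbabilityMeasure (ν.withDensity u))
    (hfn : ∀ n, IsProbabilityMeasure (ν.withDensity (un n))) :
    Tendsto (fun n => toPM (ν.withDensity (un n))) atTop (𝓝 (toPM (ν.withDensity u))) := by
  rw [ProbabilityMeasure.tendsto_iff_forall_lintegral_tendsto]
  intro g
  simp only [toPM_of hf, toPM_of (hfn _)]
  have hgm : Measurable fun x => (g x : ℝ≥0∞) := 
    (ENNReal.continuous_coe.comp g.continuous).measurable
  obtain ⟨M, hM⟩ : ∃ M : NNReal, ∀ x, g x ≤ M := ⟨_, g.apply_le_nndist_zero⟩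
  exact weak_tendsto hu hun hui hlim hint hgm (M := M) ENNReal.coe_ne_top 
    (fun x => by exact_mod_cast hM x)

/-! ### Supports -/

lemma msupp_prod_eq {X : Type*} [MeasurableSpace X] [TopologicalSpace X]
    {lam : Measure X} [SFinite lam] {f : X → ℝ≥0∞} {q : X × X → ℝ≥0∞}
    (hf : Measurable f) (hq : Measurable q) {H : Set X}
    (hfH : ∀ x, f x ≠ 0 ↔ x ∈ H) (hqH : ∀ z, q z ≠ 0 ↔ z.1 ∈ H ∧ z.2 ∈ H) :
    msupp ((lam.prod lam).withDensity q) =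
      msupp (lam.withDensity f) ×ˢ msupp (lam.withDensity f) := by
  have e1 : ∀ U : Set X, 0 < lam.withDensity f U ↔ lam (H ∩ U) ≠ 0 := by
    intro U
    rw [pos_iff_ne_zero, Ne, withDensity_apply_eq_zero hf]
    simp only [hfH]; rfl
  have e2 : ∀ W : Set (X × X), 0 < (lam.prod lam).withDensity q W ↔
      (lam.prod lam) ((H ×ˢ H) ∩ W) ≠ 0 := by
    intro U
    rw [pos_iff_ne_zero, Ne, withDensity_apply_eq_zero hq]
    simp only [hqH]; rfl
  ext ⟨x, y⟩
  simp only [msupp, mem_prod, mem_ofPred_eq, e1, e2]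
  constructor
  · intro h
    refine ⟨fun U hU hx h0 => ?_, fun U hU hy h0 => ?_⟩
    · apply h (U ×ˢ univ) (hU.prod isOpen_univ) (by simp [hx])
      rw [prod_inter_prod, Measure.prod_prod, h0, zero_mul]
    · apply h (univ ×ˢ U) (isOpen_univ.prod hU) (by simp [hy])
      rw [prod_inter_prod, Measure.prod_prod, h0, mul_zero]
  · rintro ⟨h1, h2⟩ W hW hxy h0
    obtain ⟨U, V, hU, hV, hx, hy, hUV⟩ := isOpen_prod_iff.1 hW x y hxy
    have : (lam.prod lam) ((H ×ˢ H) ∩ (U ×ˢ V)) = 0 :=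
      measure_mono_null (inter_subset_inter_right _ hUV) h0
    rw [prod_inter_prod, Measure.prod_prod, mul_eq_zero] at this
    rcases this with h | h
    · exact h1 U hU hx h
    · exact h2 V hV hy h

lemma msupp_subset_of {X : Type*} [MeasurableSpace X] [TopologicalSpace X]
    {lam : Measure X} {f : X → ℝ≥0∞} (hf : Measurable f) {H : Set X} (hH : IsClosed H)
    (hfH : ∀ x, f x ≠ 0 ↔ x ∈ H) : msupp (lam.withDensity f) ⊆ H := by
  intro x hx
  by_contra hxH
  have := hx Hᶜ hH.isOpen_compl hxH
  rw [pos_iff_ne_zero, Ne, withDensity_apply_eq_zero hf] at this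
  apply this
  simp only [hfH]
  simp

/-! ### Rate function by densities -/

lemma fst_eq_snd_iff {X : Type*} [MeasurableSpace X]
    {lam : Measure X} [IsFiniteMeasure lam] {q : X × X → ℝ≥0∞} (hq : Measurable q)
    (hqi : ∫⁻ z, q z ∂(lam.prod lam) ≠ ∞) :
    ((lam.prod lam).withDensity q).fst = ((lam.prod lam).withDensity q).snd ↔
    (fun x => ∫⁻ y, q (x, y) ∂lam) =ᵐ[lam] fun y => ∫⁻ x, q (x, y) ∂lam := by
  have e1 : ((lam.prod lam).withDensity q).fst = lam.withDensity fun x => ∫⁻ y, q (x, y) ∂lam := by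
    ext s hs
    rw [Measure.fst_apply hs, withDensity_apply _ (measurable_fst hs), withDensity_apply _ hs,
      ← lintegral_indicator (measurable_fst hs), ← lintegral_indicator hs,
      lintegral_prod _ (hq.indicator (measurable_fst hs)).aemeasurable]
    refine lintegral_congr fun x => ?_
    by_cases h : x ∈ s <;> simp [h, indicator]
  have e2 : ((lam.prod lam).withDensity q).snd = lam.withDensity fun y => ∫⁻ x, q (x, y) ∂lam := by
    ext s hs
    rw [Measure.snd_apply hs, withDensity_apply _ (measurable_snd hs), withDensity_apply _ hs,
      ← lintegral_indicator (measurable_snd hs), ← lintegral_indicator hs,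
      lintegral_prod_symm' _ (hq.indicator (measurable_snd hs))]
    refine lintegral_congr fun x => ?_
    by_cases h : x ∈ s <;> simp [h, indicator]
  rw [e1, e2]
  refine withDensity_eq_iff hq.lintegral_prod_right'.aemeasurable
    hq.lintegral_prod_left'.aemeasurable ?_
  rwa [← lintegral_prod _ hq.aemeasurable]

lemma muc_eq {E : Type*} [MeasurableSpace E] [TopologicalSpace E] [OpensMeasurableSpace E]
    [SecondCountableTopology E]
    (S : ChainSetting E) {f : E → ℝ≥0∞} (hf : Measurable f) :
    S.muc (S.lam.withDensity f) = (S.lam.prod S.lam).withDensity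
      fun z => f z.1 * ENNReal.ofReal (S.r z.1 * S.p z.1 z.2) := by
  have := S.lam_prob
  have hm : Measurable fun z : E × E => ENNReal.ofReal (S.r z.1 * S.p z.1 z.2) :=
    ((S.r_cont.comp continuous_fst).mul S.p_cont).measurable.ennreal_ofReal
  unfold ChainSetting.muc
  rw [prod_withDensity_left hf]
  exact (withDensity_mul _ (hf.comp measurable_fst) hm).symm

lemma rate_eq {E : Type*} [MeasurableSpace E] [TopologicalSpace E] [OpensMeasurableSpace E]
    [SecondCountableTopology E]
    (S : ChainSetting E) {f : E → ℝ≥0∞} {q : E × E → ℝ≥0∞} (hf : Measurable f)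
    (hft : ∀ᵐ x ∂S.lam, f x ≠ ∞)
    (hq : Measurable q) (hqi : ∫⁻ z, q z ∂(S.lam.prod S.lam) ≠ ∞)
    (hmarg : (fun x => ∫⁻ y, q (x, y) ∂S.lam) =ᵐ[S.lam] fun y => ∫⁻ x, q (x, y) ∂S.lam)
    (hac : ∀ᵐ z ∂(S.lam.prod S.lam), f z.1 * ENNReal.ofReal (S.r z.1 * S.p z.1 z.2) = 0 → q z = 0) :
    S.rateI0 (S.lam.withDensity f) ((S.lam.prod S.lam).withDensity q) =
      ∫⁻ z, PhiE (q z) (f z.1 * ENNReal.ofReal (S.r z.1 * S.p z.1 z.2)) ∂(S.lam.prod S.lam) := by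
  have := S.lam_prob
  have hm : Measurable fun z : E × E => f z.1 * ENNReal.ofReal (S.r z.1 * S.p z.1 z.2) :=
    (hf.comp measurable_fst).mul
      ((S.r_cont.comp continuous_fst).mul S.p_cont).measurable.ennreal_ofReal
  set b : E × E → ℝ≥0∞ := fun z => f z.1 * ENNReal.ofReal (S.r z.1 * S.p z.1 z.2) with hb
  have hbt : ∀ᵐ z ∂(S.lam.prod S.lam), b z ≠ ∞ := by
    have h := (Measure.quasiMeasurePreserving_fst (μ := S.lam) (ν := S.lam)).ae hft
    filter_upwards [h] with z hz
    exact ENNReal.mul_ne_top hz ENNReal.ofReal_ne_top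
  have hsf : SigmaFinite ((S.lam.prod S.lam).withDensity b) := SigmaFinite.withDensity_of_ne_top hbt
  have hqb : (S.lam.prod S.lam).withDensity q =
      ((S.lam.prod S.lam).withDensity b).withDensity (fun z => q z / b z) := by
    have := (withDensity_mul (S.lam.prod S.lam) hm (hq.div hm)).symm
    refine Eq.trans ?_ this.symm
    refine withDensity_congr_ae ?_
    filter_upwards [hac, hbt] with z h1 h2
    by_cases h : b z = 0
    · simp [h, h1 h]
    · simp only [Pi.mul_apply, Pi.div_apply]
      rw [ENNReal.mul_div_cancel h h2]
  unfold ChainSetting.rateI0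
  rw [muc_eq S hf, if_pos]
  · have h1 : ((S.lam.prod S.lam).withDensity q).rnDeriv ((S.lam.prod S.lam).withDensity b)
        =ᵐ[(S.lam.prod S.lam).withDensity b] fun z => q z / b z := by
      rw [hqb]; exact Measure.rnDeriv_withDensity _ (hq.div hm)
    rw [lintegral_congr_ae (g := fun z => PsiE (q z / b z)) (by
      filter_upwards [h1] with z hz; rw [hz])]
    exact lintegral_withDensity_eq_lintegral_mul _ hm (measurable_PsiE.comp (hq.div hm))
  · refine ⟨(fst_eq_snd_iff hq hqi).2 hmarg, ?_⟩
    rw [hqb]; exact withDensity_absolutelyContinuous _ _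

/-! ### One step of the approximation -/

section onestep

variable {X : Type*} [MeasurableSpace X] {lam : Measure X} [IsProbabilityMeasure lam]
  {A B : Set X}

lemma TT12_ne_zero_iff (hA : MeasurableSet A) (hB : MeasurableSet B)
    (hBA : B ⊆ A) {N : Set X} (hN : lam N = 0) (hNA : N ⊆ A) (hBne : ∀ x ∈ B, lam A ≠ 0)
    {g : X × X → ℝ≥0∞} (hg : Measurable g) (hpos : ∀ z : X × X, z.1 ∉ N → g z ≠ 0) (z : X × X) :
    TT2 lam A B (TT1 lam A B g) z ≠ 0 ↔ (z.1 ∉ A ∨ z.1 ∈ B) ∧ (z.2 ∉ A ∨ z.2 ∈ B) := by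
  have hm := measurable_TT1' (lam := lam) hA hB hg
  have h1 : ∀ x, (x ∉ A ∨ x ∈ B) → ∀ y, TT1 lam A B g (x, y) ≠ 0 := fun x hx y =>
    TT_pos hA hBA hN hNA hBne (hg.comp (measurable_id.prodMk measurable_const))
      (fun x' hx' => hpos (x', y) hx') hx
  constructor
  · intro h
    by_contra hc
    apply h
    by_cases hx : z.1 ∉ A ∨ z.1 ∈ B
    · have hy : ¬ (z.2 ∉ A ∨ z.2 ∈ B) := fun hy => hc ⟨hx, hy⟩
      push Not at hy
      exact TT_mem_diff hy.1 hy.2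
    · push Not at hx
      have : (fun y => TT1 lam A B g (z.1, y)) = fun _ => 0 :=
        funext fun y => TT_mem_diff hx.1 hx.2
      unfold TT2
      rw [this, TT_zero]
  · rintro ⟨hx, hy⟩
    exact TT_pos (N := ∅) hA hBA (by simp) (by simp) hBne
      (hm.comp (measurable_const.prodMk measurable_id)) (fun y _ => h1 z.1 hx y) hy

lemma onestep (hA : MeasurableSet A) (hB : MeasurableSet B)
    (hBA : B ⊆ A) {N : Set X} (hN : lam N = 0) (hNA : N ⊆ A) (hBne : ∀ x ∈ B, lam A ≠ 0)
    (hB0 : lam B = 0 → lam A = 0)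
    {f : X → ℝ≥0∞} {q w : X × X → ℝ≥0∞} (hf : Measurable f) (hq : Measurable q)
    (hw : Measurable w) {W : ℝ≥0∞} (hWt : W ≠ ∞) (hwW : ∀ z, w z ≤ W)
    (hfpos : ∀ x ∉ N, f x ≠ 0) (hqpos : ∀ z, q z ≠ 0) (hwpos : ∀ z : X × X, z.1 ∉ N → w z ≠ 0)
    (hfi : ∫⁻ x, f x ∂lam ≠ ∞) (hqi : ∫⁻ z, q z ∂(lam.prod lam) ≠ ∞)
    {K1 K2 : ℝ} (hK1 : 1 ≤ K1) (hK2 : 1 ≤ K2)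
    (hw1 : ∀ x ∈ B, ∀ x' ∈ A, ∀ y, w (x', y) ≤ ENNReal.ofReal K1 * w (x, y))
    (hw2 : ∀ x y, y ∈ B → (∫⁻ y' in A, w (x, y') ∂lam) / lam B ≤ ENNReal.ofReal K2 * w (x, y)) :
    ∫⁻ z, PhiE (TT2 lam A B (TT1 lam A B q) z) (TT lam A B f z.1 * w z) ∂(lam.prod lam)
      ≤ ∫⁻ z, PhiE (q z) (f z.1 * w z) ∂(lam.prod lam) +
        (ENNReal.ofReal (Real.log (K1 * K2)) *
          ∫⁻ z in (Aᶜ ×ˢ Aᶜ)ᶜ, TT2 lam A B (TT1 lam A B q) z ∂(lam.prod lam) +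
          W * ∫⁻ z in (Aᶜ ×ˢ Aᶜ)ᶜ, TT lam A B f z.1 ∂(lam.prod lam)) := by
  set m : X × X → ℝ≥0∞ := fun z => f z.1 * w z with hmdef
  have hm : Measurable m := (hf.comp measurable_fst).mul hw
  have hmi : ∫⁻ z, m z ∂(lam.prod lam) ≠ ∞ := by
    have : ∫⁻ z, m z ∂(lam.prod lam) ≤ ∫⁻ z : X × X, f z.1 * W ∂(lam.prod lam) :=
      lintegral_mono fun z => by simp only [hmdef]; gcongr; exact hwW z
    refine ne_top_of_le_ne_top ?_ this
    have hf1 : Measurable fun z : X × X => f z.1 := hf.comp measurable_fst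
    rw [lintegral_mul_const _ hf1, lintegral_prod _ hf1.aemeasurable]
    simp only [lintegral_const, measure_univ, mul_one]
    exact ENNReal.mul_ne_top hfi hWt
  have hT1q := measurable_TT1' (lam := lam) hA hB hq
  have hT1m := measurable_TT1' (lam := lam) hA hB hm
  have hT2q := measurable_TT2 (lam := lam) hA hB hT1q
  have hT2m := measurable_TT2 (lam := lam) hA hB hT1m
  have hTf := measurable_TT (lam := lam) hA hB hf
  have hmpos : ∀ z : X × X, z.1 ∉ N → m z ≠ 0 := fun z hz =>
    mul_ne_zero (hfpos _ hz) (hwpos z hz)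
  have ineT1 : ∫⁻ z, TT1 lam A B q z ∂(lam.prod lam) ≠ ∞ := by
    rwa [lintegral_TT1 hA hB hB0 hq]
  have ineT1m : ∫⁻ z, TT1 lam A B m z ∂(lam.prod lam) ≠ ∞ := by
    rwa [lintegral_TT1 hA hB hB0 hm]
  have ineT2 : ∫⁻ z, TT2 lam A B (TT1 lam A B q) z ∂(lam.prod lam) ≠ ∞ := by
    rwa [lintegral_TT2 hA hB hB0 hT1q]
  have ineT2m : ∫⁻ z, TT2 lam A B (TT1 lam A B m) z ∂(lam.prod lam) ≠ ∞ := by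
    rwa [lintegral_TT2 hA hB hB0 hT1m]
  have ineTf : ∫⁻ x, TT lam A B f x ∂lam ≠ ∞ := by
    rwa [lintegral_TT hA hB hB0 hf]
  -- data processing
  have dp : ∫⁻ z, PhiE (TT2 lam A B (TT1 lam A B q) z) (TT2 lam A B (TT1 lam A B m) z)
      ∂(lam.prod lam) ≤ ∫⁻ z, PhiE (q z) (m z) ∂(lam.prod lam) := by
    refine (jensen_TT2 hA hB hBA hT1q hT1m ?_ ineT1 ineT1m).trans
      (jensen_TT1 hA hB hBA hq hm ?_ hqi hmi)
    · refine ae_of_all _ fun z hz => ?_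
      by_cases hx : z.1 ∉ A ∨ z.1 ∈ B
      · exact absurd hz (TT_pos hA hBA hN hNA hBne
          (hm.comp (measurable_id.prodMk measurable_const))
          (fun x' hx' => hmpos (x', z.2) hx') hx)
      · push Not at hx
        exact TT_mem_diff hx.1 hx.2
    · have h := (Measure.quasiMeasurePreserving_fst (μ := lam) (ν := lam)).ae
        (measure_eq_zero_iff_ae_notMem.1 hN)
      filter_upwards [h] with z hz h0
      exact absurd h0 (hmpos z hz)
  -- comparison of reference measures
  have hOK1 : (1 : ℝ≥0∞) ≤ ENNReal.ofReal K1 := by simpa using hK1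
  have hOK2 : (1 : ℝ≥0∞) ≤ ENNReal.ofReal K2 := by simpa using hK2
  have cmp1 : ∀ x y, TT1 lam A B m (x, y) ≤
      (ENNReal.ofReal K1 * TT lam A B f x) * w (x, y) := by
    intro x y
    unfold TT1
    by_cases hxA : x ∈ A
    · by_cases hxB : x ∈ B
      · dsimp only
        rw [TT_mem hBA hxB, TT_mem hBA hxB]
        have : ∫⁻ x' in A, m (x', y) ∂lam ≤
            ∫⁻ x' in A, f x' * (ENNReal.ofReal K1 * w (x, y)) ∂lam :=
          setLIntegral_mono' hA fun x' hx' => by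
            simp only [hmdef]; gcongr; exact hw1 x hxB x' hx' y
        rw [lintegral_mul_const _ hf] at this
        refine (ENNReal.div_le_div_right this _).trans (le_of_eq ?_)
        simp only [div_eq_mul_inv]; ring
      · dsimp only
        rw [TT_mem_diff hxA hxB]; exact zero_le
    · dsimp only
      rw [TT_notMem hBA hxA, TT_notMem hBA hxA, mul_assoc]
      exact le_mul_of_one_le_left' hOK1
  have cmp2 : ∀ x y, TT lam A B (fun y => w (x, y)) y ≤ ENNReal.ofReal K2 * w (x, y) := by
    intro x y
    by_cases hyA : y ∈ A
    · by_cases hyB : y ∈ B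
      · rw [TT_mem hBA hyB]; exact hw2 x y hyB
      · rw [TT_mem_diff hyA hyB]; exact zero_le
    · rw [TT_notMem hBA hyA]; exact le_mul_of_one_le_left' hOK2
  have cmp : ∀ z, TT2 lam A B (TT1 lam A B m) z ≤
      ENNReal.ofReal (K1 * K2) * (TT lam A B f z.1 * w z) := by
    rintro ⟨x, y⟩
    unfold TT2
    refine (TT_mono (fun y => cmp1 x y) y).trans ?_
    have hwx : Measurable fun y => w (x, y) := hw.comp (measurable_const.prodMk measurable_id)
    rw [TT_const_mul hwx, ENNReal.ofReal_mul (by linarith)]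
    calc _ ≤ ENNReal.ofReal K1 * TT lam A B f x * (ENNReal.ofReal K2 * w (x, y)) := by
          gcongr; exact cmp2 x y
      _ = _ := by ring
  have hS : MeasurableSet ((Aᶜ ×ˢ Aᶜ)ᶜ : Set (X × X)) := (hA.compl.prod hA.compl).compl
  have hTf1 : Measurable fun z : X × X => TT lam A B f z.1 := hTf.comp measurable_fst
  calc _ ≤ ∫⁻ z, (PhiE (TT2 lam A B (TT1 lam A B q) z) (TT2 lam A B (TT1 lam A B m) z) +
        ((Aᶜ ×ˢ Aᶜ)ᶜ : Set (X × X)).indicator (fun z =>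
          ENNReal.ofReal (Real.log (K1 * K2)) * TT2 lam A B (TT1 lam A B q) z +
          W * TT lam A B f z.1) z) ∂(lam.prod lam) := by
        refine lintegral_mono_ae ?_
        have h := (Measure.quasiMeasurePreserving_fst (μ := lam) (ν := lam)).ae
          (ae_lt_top hTf ineTf)
        filter_upwards [h, ae_lt_top hT2q ineT2, ae_lt_top hT2m ineT2m] with z h1 h2 h3
        by_cases hz : z ∈ ((Aᶜ ×ˢ Aᶜ)ᶜ : Set (X × X))
        · rw [indicator_of_mem hz]
          refine (PhiE_compare (K := K1 * K2) (b := TT2 lam A B (TT1 lam A B m) z)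
            (by nlinarith) ?_ h2.ne h3.ne ?_ (cmp z)).trans ?_
          · intro h0
            by_contra hne
            rw [← Ne, TT12_ne_zero_iff hA hB hBA hN hNA hBne hq (fun z _ => hqpos z),
              ← TT12_ne_zero_iff hA hB hBA hN hNA hBne hm hmpos] at hne
            exact hne h0
          · exact ENNReal.mul_ne_top h1.ne (ne_top_of_le_ne_top hWt (hwW z))
          · refine add_le_add le_rfl (add_le_add le_rfl ?_)
            rw [mul_comm]
            exact mul_le_mul' (hwW z) le_rfl
        · rw [indicator_of_notMem hz, add_zero]
          simp only [mem_compl_iff, not_not, mem_prod] at hz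
          have : TT2 lam A B (TT1 lam A B m) z = TT lam A B f z.1 * w z := by
            unfold TT2
            rw [TT_notMem hBA hz.2]
            unfold TT1
            rw [TT_notMem hBA hz.1, TT_notMem hBA hz.1]
          rw [this]
    _ = ∫⁻ z, PhiE (TT2 lam A B (TT1 lam A B q) z) (TT2 lam A B (TT1 lam A B m) z)
          ∂(lam.prod lam) + (ENNReal.ofReal (Real.log (K1 * K2)) *
          ∫⁻ z in (Aᶜ ×ˢ Aᶜ)ᶜ, TT2 lam A B (TT1 lam A B q) z ∂(lam.prod lam) +
          W * ∫⁻ z in (Aᶜ ×ˢ Aᶜ)ᶜ, TT lam A B f z.1 ∂(lam.prod lam)) := by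
        rw [lintegral_add_left (measurable_PhiE hT2q hT2m), lintegral_indicator hS,
          lintegral_add_left (hT2q.const_mul _), lintegral_const_mul _ hT2q,
          lintegral_const_mul _ hTf1]
    _ ≤ _ := by gcongr

end onestep

/-! ### Main construction -/

section main

variable {E : Type*} [MeasurableSpace E] [TopologicalSpace E] [PolishSpace E]
  [CompactSpace E] [BorelSpace E] [Nonempty E]

def wgt (S : ChainSetting E) (z : E × E) : ℝ≥0∞ := ENNReal.ofReal (S.r z.1 * S.p z.1 z.2)

lemma measurable_wgt (S : ChainSetting E) : Measurable (wgt S) :=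
  ((S.r_cont.comp continuous_fst).mul S.p_cont).measurable.ennreal_ofReal

lemma exists_consts (S : ChainSetting E) : ∃ pm pM R : ℝ, 0 < pm ∧ 0 ≤ R ∧
    (∀ x y, pm ≤ S.p x y) ∧ (∀ x y, S.p x y ≤ pM) ∧ (∀ x, S.r x ≤ R) := by
  obtain ⟨z1, -, h1⟩ := isCompact_univ.exists_isMinOn (univ_nonempty (α := E × E))
    S.p_cont.continuousOn
  obtain ⟨z2, -, h2⟩ := isCompact_univ.exists_isMaxOn (univ_nonempty (α := E × E))
    S.p_cont.continuousOn
  obtain ⟨x, -, h3⟩ := isCompact_univ.exists_isMaxOn (univ_nonempty (α := E))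
    S.r_cont.continuousOn
  exact ⟨_, _, _, S.p_pos z1.1 z1.2, S.r_nonneg x, fun x y => h1 (mem_univ (x, y)),
    fun x y => h2 (mem_univ (x, y)), fun y => h3 (mem_univ y)⟩

lemma lam_E0 (S : ChainSetting E) : S.lam S.E0 = 0 := by
  have hm : Measurable fun x => (ENNReal.ofReal (S.r x))⁻¹ :=
    S.r_cont.measurable.ennreal_ofReal.inv
  have := ae_lt_top hm S.inv_r_int
  rw [measure_eq_zero_iff_ae_notMem]
  filter_upwards [this] with x hx h0
  have h0 : S.r x = 0 := h0
  simp [h0] at hx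

lemma ae_r_pos (S : ChainSetting E) : ∀ᵐ x ∂S.lam, 0 < S.r x := by
  filter_upwards [measure_eq_zero_iff_ae_notMem.1 (lam_E0 S)] with x hx
  exact lt_of_le_of_ne (S.r_nonneg x) (Ne.symm hx)

lemma wgt_ne_zero (S : ChainSetting E) {z : E × E} (h : 0 < S.r z.1) : wgt S z ≠ 0 := by
  unfold wgt
  rw [Ne, ENNReal.ofReal_eq_zero, not_le]
  exact mul_pos h (S.p_pos _ _)

lemma exists_reference (S : ChainSetting E) : ∃ (f0 : E → ℝ≥0∞) (q0 : ℝ≥0∞),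
    Measurable f0 ∧ ∫⁻ x, f0 x ∂S.lam = 1 ∧ (∀ x, f0 x ≠ 0) ∧ q0 ≠ 0 ∧ q0 ≠ ∞ ∧
    ∫⁻ z, PhiE q0 (f0 z.1 * wgt S z) ∂(S.lam.prod S.lam) ≠ ∞ := by
  have := S.lam_prob
  obtain ⟨pm, pM, R, hpm, hR, h1, h2, h3⟩ := exists_consts S
  have hm : Measurable fun x => (ENNReal.ofReal (S.r x))⁻¹ :=
    S.r_cont.measurable.ennreal_ofReal.inv
  set Z := ∫⁻ x, (ENNReal.ofReal (S.r x))⁻¹ ∂S.lam with hZ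
  have hZt : Z ≠ ∞ := S.inv_r_int
  have hZ0 : Z ≠ 0 := by
    intro h
    rw [hZ, lintegral_eq_zero_iff hm] at h
    have : ∀ᵐ x ∂S.lam, False := by
      filter_upwards [h] with x hx
      simp at hx
    simp at this
    exact IsProbabilityMeasure.ne_zero S.lam this
  have hq0 : Z⁻¹ ≠ 0 := ENNReal.inv_ne_zero.2 hZt
  have hq0t : Z⁻¹ ≠ ∞ := ENNReal.inv_ne_top.2 hZ0
  refine ⟨fun x => Z⁻¹ * (ENNReal.ofReal (S.r x))⁻¹, Z⁻¹, hm.const_mul _, ?_, ?_, hq0, hq0t, ?_⟩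
  · rw [lintegral_const_mul _ hm, ENNReal.inv_mul_cancel hZ0 hZt]
  · intro x
    exact mul_ne_zero hq0 (ENNReal.inv_ne_zero.2 ENNReal.ofReal_ne_top)
  · have hb : ∫⁻ z, PhiE Z⁻¹ (Z⁻¹ * (ENNReal.ofReal (S.r z.1))⁻¹ * wgt S z) ∂(S.lam.prod S.lam) ≤
        ∫⁻ z, Z⁻¹ * ENNReal.ofReal (-Real.log pm - 1 + pM) ∂(S.lam.prod S.lam) := by
      refine lintegral_mono_ae ?_
      filter_upwards [(Measure.quasiMeasurePreserving_fst (μ := S.lam) (ν := S.lam)).ae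
        (ae_r_pos S)] with z hz
      have e : Z⁻¹ * (ENNReal.ofReal (S.r z.1))⁻¹ * wgt S z =
          Z⁻¹ * ENNReal.ofReal (S.p z.1 z.2) := by
        unfold wgt
        rw [ENNReal.ofReal_mul hz.le, mul_assoc, ← mul_assoc _ (ENNReal.ofReal (S.r z.1)),
          ENNReal.inv_mul_cancel (by simpa using hz) ENNReal.ofReal_ne_top, one_mul]
      have e2 : PhiE (Z⁻¹ * ENNReal.ofReal 1) (Z⁻¹ * ENNReal.ofReal (S.p z.1 z.2)) =
        Z⁻¹ * ENNReal.ofReal (1 * Real.log (1 / S.p z.1 z.2) - 1 + S.p z.1 z.2) := by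
        rw [PhiE_smul hq0 hq0t, PhiE_ofReal zero_le_one (S.p_pos _ _)]
      rw [e]
      rw [ENNReal.ofReal_one, mul_one] at e2
      rw [e2]
      refine mul_le_mul' le_rfl (ENNReal.ofReal_le_ofReal ?_)
      have := Real.log_le_log hpm (h1 z.1 z.2)
      have h2' := h2 z.1 z.2
      rw [one_mul, one_div, Real.log_inv]
      linarith
    refine ne_top_of_le_ne_top ?_ hb
    rw [lintegral_const]
    exact ENNReal.mul_ne_top (ENNReal.mul_ne_top hq0t ENNReal.ofReal_ne_top) (measure_ne_top _ _)

/-- Consequences of condition (iv) packaged. -/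
lemma hyp_sets (S : ChainSetting E) {d : ℝ} (hd : 0 < d) {C : ℝ≥0∞} (hC : C ≠ ∞)
    (h : S.lam {x | S.r x < 2 * d} ≤ C * S.lam ({x | S.r x < 2 * d} \ {x | S.r x < d}))
    {pm pM : ℝ} (hpm : 0 < pm)
    (h1 : ∀ x y, pm ≤ S.p x y) (h2 : ∀ x y, S.p x y ≤ pM) :
    (∀ x ∈ {x | S.r x < 2 * d} \ {x | S.r x < d}, ∀ x' ∈ {x | S.r x < 2 * d}, ∀ y,
      wgt S (x', y) ≤ ENNReal.ofReal (2 * (pM / pm)) * wgt S (x, y)) ∧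
    (∀ x y, y ∈ {x | S.r x < 2 * d} \ {x | S.r x < d} →
      (∫⁻ y' in {x | S.r x < 2 * d}, wgt S (x, y') ∂S.lam) /
        S.lam ({x | S.r x < 2 * d} \ {x | S.r x < d}) ≤
        ENNReal.ofReal ((pM / pm) * max 1 C.toReal) * wgt S (x, y)) := by
  have hprob := S.lam_prob
  have hpM : 0 < pM := hpm.trans_le ((h1 (Classical.arbitrary E) (Classical.arbitrary E)).trans
    (h2 _ _))
  have hP : 0 < pM / pm := div_pos hpM hpm
  constructor
  · intro x hx x' hx' y
    unfold wgt
    rw [← ENNReal.ofReal_mul (by positivity)]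
    refine ENNReal.ofReal_le_ofReal ?_
    have a1 : S.r x' < 2 * d := hx'
    have a2 : d ≤ S.r x := not_lt.1 hx.2
    have a3 := S.r_nonneg x
    dsimp only
    calc S.r x' * S.p x' y ≤ (2 * d) * pM := by
          gcongr
          · exact (S.p_pos _ _).le
          · exact h2 _ _
      _ = 2 * (pM / pm) * (d * pm) := by field_simp
      _ ≤ _ := by gcongr; exact h1 _ _
  · intro x y hy
    set A := {x | S.r x < 2 * d}
    set B := A \ {x | S.r x < d}
    have b1 : ∀ y', wgt S (x, y') ≤ ENNReal.ofReal (pM / pm) * wgt S (x, y) := by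
      intro y'
      unfold wgt
      rw [← ENNReal.ofReal_mul (by positivity)]
      refine ENNReal.ofReal_le_ofReal ?_
      have := S.r_nonneg x
      dsimp only
      calc S.r x * S.p x y' ≤ S.r x * pM := by gcongr; exact h2 _ _
        _ = (pM / pm) * (S.r x * pm) := by field_simp
        _ ≤ _ := by gcongr; exact h1 _ _
    have b2 : ∫⁻ y' in A, wgt S (x, y') ∂S.lam ≤
        ENNReal.ofReal (pM / pm) * wgt S (x, y) * S.lam A := by
      rw [← setLIntegral_const]
      exact lintegral_mono fun y' => b1 y'
    refine (ENNReal.div_le_div_right b2 _).trans ?_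
    refine ENNReal.div_le_of_le_mul ?_
    have hCC : C ≤ ENNReal.ofReal (max 1 C.toReal) := by
      rw [← ENNReal.ofReal_toReal hC]
      refine ENNReal.ofReal_le_ofReal ?_
      rw [ENNReal.toReal_ofReal ENNReal.toReal_nonneg]
      exact le_max_right _ _
    calc ENNReal.ofReal (pM / pm) * wgt S (x, y) * S.lam A
        ≤ ENNReal.ofReal (pM / pm) * wgt S (x, y) * (ENNReal.ofReal (max 1 C.toReal) * S.lam B) :=
          mul_le_mul' le_rfl (h.trans (mul_le_mul' hCC le_rfl))
      _ = _ := by rw [ENNReal.ofReal_mul hP.le]; ring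

end main

section main2

variable {E : Type*} [MeasurableSpace E] [TopologicalSpace E] [PolishSpace E]
  [CompactSpace E] [BorelSpace E] [Nonempty E]

lemma mixing (S : ChainSetting E) {f : E → ℝ≥0∞} {q : E × E → ℝ≥0∞} (hf : Measurable f)
    (hq : Measurable q) (hf1 : ∫⁻ x, f x ∂S.lam = 1) (hqi : ∫⁻ z, q z ∂(S.lam.prod S.lam) ≠ ∞)
    (hmarg : (fun x => ∫⁻ y, q (x, y) ∂S.lam) =ᵐ[S.lam] fun y => ∫⁻ x, q (x, y) ∂S.lam)
    (hac : ∀ᵐ z ∂(S.lam.prod S.lam), f z.1 * wgt S z = 0 → q z = 0) :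
    ∃ (fn : ℕ → E → ℝ≥0∞) (qn : ℕ → E × E → ℝ≥0∞) (c : ℕ → ℝ≥0∞),
      (∀ n, Measurable (fn n)) ∧ (∀ n, Measurable (qn n)) ∧
      (∀ n, ∫⁻ x, fn n x ∂S.lam = 1) ∧ (∀ n, ∫⁻ z, qn n z ∂(S.lam.prod S.lam) ≠ ∞) ∧
      Tendsto (fun n => ∫⁻ z, qn n z ∂(S.lam.prod S.lam)) atTop
        (𝓝 (∫⁻ z, q z ∂(S.lam.prod S.lam))) ∧
      (∀ n x, fn n x ≠ 0) ∧ (∀ n z, qn n z ≠ 0) ∧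
      (∀ᵐ x ∂S.lam, Tendsto (fun n => fn n x) atTop (𝓝 (f x))) ∧
      (∀ z, Tendsto (fun n => qn n z) atTop (𝓝 (q z))) ∧
      (∀ n, (fun x => ∫⁻ y, qn n (x, y) ∂S.lam) =ᵐ[S.lam] fun y => ∫⁻ x, qn n (x, y) ∂S.lam) ∧
      Tendsto c atTop (𝓝 (∫⁻ z, PhiE (q z) (f z.1 * wgt S z) ∂(S.lam.prod S.lam))) ∧
      (∀ n, ∫⁻ z, PhiE (qn n z) (fn n z.1 * wgt S z) ∂(S.lam.prod S.lam) ≤ c n) := by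
  have hprob := S.lam_prob
  obtain ⟨f0, q0, hf0, hf01, hf0n, hq0, hq0t, hI0⟩ := exists_reference S
  set I0 := ∫⁻ z, PhiE q0 (f0 z.1 * wgt S z) ∂(S.lam.prod S.lam) with hI0def
  set I := ∫⁻ z, PhiE (q z) (f z.1 * wgt S z) ∂(S.lam.prod S.lam) with hIdef
  have hw := measurable_wgt S
  let e : ℕ → ℝ≥0∞ := fun n => ((n : ℝ≥0∞) + 2)⁻¹
  have he0 : ∀ n, e n ≠ 0 := fun n => ENNReal.inv_ne_zero.2 (by finiteness)
  have he2 : ∀ n, e n ≤ 2⁻¹ := fun n => ENNReal.inv_le_inv.2 le_add_self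
  have het : ∀ n, e n ≠ ∞ := fun n => ne_top_of_le_ne_top (by simp) (he2 n)
  have he1 : ∀ n, e n < 1 := fun n => (he2 n).trans_lt (by simp)
  have hel : Tendsto e atTop (𝓝 0) := by
    have := (tendsto_add_atTop_iff_nat 2).2 ENNReal.tendsto_inv_nat_nhds_zero
    simpa [e] using this
  have ha0 : ∀ n, 1 - e n ≠ 0 := fun n => (tsub_pos_of_lt (he1 n)).ne'
  have ha1 : ∀ n, 1 - e n ≤ 1 := fun n => tsub_le_self
  have hat : ∀ n, 1 - e n ≠ ∞ := fun n => ne_top_of_le_ne_top (by simp) (ha1 n)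
  have hal : Tendsto (fun n => 1 - e n) atTop (𝓝 1) := by
    have := ENNReal.Tendsto.sub (tendsto_const_nhds (x := (1 : ℝ≥0∞))) hel (Or.inl (by simp))
    simpa using this
  have key : ∀ a b : ℝ≥0∞, b ≠ ∞ →
      Tendsto (fun n => (1 - e n) * a + e n * b) atTop (𝓝 a) := by
    intro a b hb
    have h1 := ENNReal.Tendsto.mul_const (b := a) hal (Or.inl one_ne_zero)
    have h2 := ENNReal.Tendsto.mul_const (b := b) hel (Or.inr hb)
    simpa using h1.add h2
  have iq : ∀ n, ∫⁻ z, ((1 - e n) * q z + e n * q0) ∂(S.lam.prod S.lam) =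
      (1 - e n) * ∫⁻ z, q z ∂(S.lam.prod S.lam) + e n * q0 := by
    intro n
    rw [lintegral_add_left (hq.const_mul _), lintegral_const_mul _ hq]
    simp
  refine ⟨fun n x => (1 - e n) * f x + e n * f0 x, fun n z => (1 - e n) * q z + e n * q0,
    fun n => I + e n * I0, ?_, ?_, ?_, ?_, ?_, ?_, ?_, ?_, ?_, ?_, ?_, ?_⟩
  · exact fun n => (hf.const_mul _).add (hf0.const_mul _)
  · exact fun n => (hq.const_mul _).add measurable_const
  · intro n
    dsimp only
    rw [lintegral_add_left (hf.const_mul _), lintegral_const_mul _ hf, lintegral_const_mul _ hf0,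
      hf1, hf01, mul_one, mul_one, tsub_add_cancel_of_le (he1 n).le]
  · intro n
    dsimp only
    rw [iq]
    exact ENNReal.add_ne_top.2 ⟨ENNReal.mul_ne_top (hat n) hqi, ENNReal.mul_ne_top (het n) hq0t⟩
  · simp only [iq]
    exact key _ _ hq0t
  · intro n x h
    exact mul_ne_zero (he0 n) (hf0n x) (add_eq_zero.1 h).2
  · intro n z h
    exact mul_ne_zero (he0 n) hq0 (add_eq_zero.1 h).2
  · filter_upwards [ae_lt_top hf0 (by rw [hf01]; simp)] with x hx
    exact key _ _ hx.ne
  · exact fun z => key _ _ hq0t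
  · intro n
    filter_upwards [hmarg] with x hx
    have m1 : Measurable fun y => q (x, y) := hq.comp (measurable_const.prodMk measurable_id)
    have m2 : Measurable fun y => q (y, x) := hq.comp (measurable_id.prodMk measurable_const)
    rw [lintegral_add_left (m1.const_mul _), lintegral_const_mul _ m1,
      lintegral_add_left (m2.const_mul _), lintegral_const_mul _ m2, hx]
  · have h2 := ENNReal.Tendsto.mul_const (b := I0) hel (Or.inr hI0)
    simpa using h2.const_add I
  · intro n
    have mm : Measurable fun z : E × E => PhiE (q z) (f z.1 * wgt S z) :=
      measurable_PhiE hq ((hf.comp measurable_fst).mul hw)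
    have mm0 : Measurable fun z : E × E => PhiE q0 (f0 z.1 * wgt S z) :=
      measurable_PhiE measurable_const ((hf0.comp measurable_fst).mul hw)
    calc ∫⁻ z, PhiE ((1 - e n) * q z + e n * q0) (((1 - e n) * f z.1 + e n * f0 z.1) * wgt S z)
          ∂(S.lam.prod S.lam)
        ≤ ∫⁻ z, (PhiE (q z) (f z.1 * wgt S z) + e n * PhiE q0 (f0 z.1 * wgt S z))
          ∂(S.lam.prod S.lam) := by
          refine lintegral_mono_ae ?_
          have qmp := Measure.quasiMeasurePreserving_fst (μ := S.lam) (ν := S.lam)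
          filter_upwards [hac, ae_lt_top hq hqi, qmp.ae (ae_r_pos S),
            qmp.ae (ae_lt_top hf (by rw [hf1]; simp)),
            qmp.ae (ae_lt_top hf0 (by rw [hf01]; simp))] with z h1 h2 h3 h4 h5
          have hwt : wgt S z ≠ ∞ := ENNReal.ofReal_ne_top
          rw [add_mul, mul_assoc, mul_assoc]
          refine (PhiE_add_le ?_ ?_ ?_ ?_ ?_ ?_).trans ?_
          · intro h
            rw [h1 ((mul_eq_zero.1 h).resolve_left (ha0 n)), mul_zero]
          · intro h
            exact absurd h (mul_ne_zero (he0 n) (mul_ne_zero (hf0n _) (wgt_ne_zero S h3)))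
          · exact ENNReal.mul_ne_top (hat n) h2.ne
          · exact ENNReal.mul_ne_top (hat n) (ENNReal.mul_ne_top h4.ne hwt)
          · exact ENNReal.mul_ne_top (het n) hq0t
          · exact ENNReal.mul_ne_top (het n) (ENNReal.mul_ne_top h5.ne hwt)
          · rw [PhiE_smul (ha0 n) (hat n), PhiE_smul (he0 n) (het n)]
            exact add_le_add (mul_le_of_le_one_left' (ha1 n)) le_rfl
      _ = I + e n * I0 := by rw [lintegral_add_left mm, lintegral_const_mul _ mm0]

lemma core (S : ChainSetting E) (hiv : S.CondIV)
    {f : E → ℝ≥0∞} {q : E × E → ℝ≥0∞} (hf : Measurable f)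
    (hq : Measurable q) (hf1 : ∫⁻ x, f x ∂S.lam = 1) (hqi : ∫⁻ z, q z ∂(S.lam.prod S.lam) ≠ ∞)
    (hmarg : (fun x => ∫⁻ y, q (x, y) ∂S.lam) =ᵐ[S.lam] fun y => ∫⁻ x, q (x, y) ∂S.lam)
    (hac : ∀ᵐ z ∂(S.lam.prod S.lam), f z.1 * wgt S z = 0 → q z = 0) :
    ∃ (fs : ℕ → E → ℝ≥0∞) (qs : ℕ → E × E → ℝ≥0∞),
      (∀ n, Measurable (fs n)) ∧ (∀ n, Measurable (qs n)) ∧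
      (∀ n, ∫⁻ x, fs n x ∂S.lam = 1) ∧ (∀ n, ∫⁻ z, qs n z ∂(S.lam.prod S.lam) ≠ ∞) ∧
      (∀ n, S.MemM2 (S.lam.withDensity (fs n)) ((S.lam.prod S.lam).withDensity (qs n))) ∧
      (∀ᵐ x ∂S.lam, Tendsto (fun n => fs n x) atTop (𝓝 (f x))) ∧
      (∀ᵐ z ∂(S.lam.prod S.lam), Tendsto (fun n => qs n z) atTop (𝓝 (q z))) ∧
      Tendsto (fun n => ∫⁻ z, qs n z ∂(S.lam.prod S.lam)) atTop
        (𝓝 (∫⁻ z, q z ∂(S.lam.prod S.lam))) ∧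
      Tendsto (fun n => S.rateI0 (S.lam.withDensity (fs n))
        ((S.lam.prod S.lam).withDensity (qs n))) atTop
        (𝓝 (S.rateI0 (S.lam.withDensity f) ((S.lam.prod S.lam).withDensity q))) := by
  have hprob := S.lam_prob
  obtain ⟨δ, hδ, hδl, C, hC, hiv⟩ := hiv
  obtain ⟨pm, pM, R, hpm, hR, h1, h2, h3⟩ := exists_consts S
  obtain ⟨fn, qn, c, mfn, mqn, ifn, iqn, lqn, fn0, qn0, lfn, lqnp, hmn, hc, hcn⟩ :=
    mixing S hf hq hf1 hqi hmarg hac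
  have hw := measurable_wgt S
  have hpmM : pm ≤ pM := (h1 (Classical.arbitrary E) (Classical.arbitrary E)).trans (h2 _ _)
  have hP : 1 ≤ pM / pm := (one_le_div hpm).2 hpmM
  let A : ℕ → Set E := fun n => {x | S.r x < 2 * δ n}
  let B : ℕ → Set E := fun n => A n \ {x | S.r x < δ n}
  have hAo : ∀ n, IsOpen (A n) := fun n => isOpen_lt S.r_cont continuous_const
  have hA : ∀ n, MeasurableSet (A n) := fun n => (hAo n).measurableSet
  have hB : ∀ n, MeasurableSet (B n) := fun n =>
    (hA n).diff (isOpen_lt S.r_cont continuous_const).measurableSet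
  have hBA : ∀ n, B n ⊆ A n := fun n => sdiff_subset
  have hN := lam_E0 S
  have hNA : ∀ n, S.E0 ⊆ A n := fun n x hx => by
    have hx : S.r x = 0 := hx
    have := hδ n
    show S.r x < 2 * δ n
    rw [hx]; linarith
  have hBne : ∀ n, ∀ x ∈ B n, S.lam (A n) ≠ 0 := fun n x hx =>
    (S.lam_pos _ (hAo n) ⟨x, hBA n hx⟩).ne'
  have hB0 : ∀ n, S.lam (B n) = 0 → S.lam (A n) = 0 := fun n h => by
    have := hiv n
    change S.lam (A n) ≤ C * S.lam (B n) at this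
    rw [h, mul_zero] at this
    exact nonpos_iff_eq_zero.1 this
  have hH : ∀ n x, (x ∉ A n ∨ x ∈ B n) ↔ δ n ≤ S.r x := by
    intro n x
    have := hδ n
    simp only [A, B, Set.mem_sdiff, mem_ofPred_eq, not_lt]
    constructor
    · rintro (h | h)
      · linarith
      · exact h.2
    · intro h
      by_cases h' : 2 * δ n ≤ S.r x
      · exact Or.inl h'
      · exact Or.inr ⟨not_le.1 h', h⟩
  let fs : ℕ → E → ℝ≥0∞ := fun n => TT S.lam (A n) (B n) (fn n)
  let qs : ℕ → E × E → ℝ≥0∞ := fun n =>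
    TT2 S.lam (A n) (B n) (TT1 S.lam (A n) (B n) (qn n))
  have mfs : ∀ n, Measurable (fs n) := fun n => measurable_TT (hA n) (hB n) (mfn n)
  have mT1 : ∀ n, Measurable (TT1 S.lam (A n) (B n) (qn n)) :=
    fun n => measurable_TT1' (hA n) (hB n) (mqn n)
  have mqs : ∀ n, Measurable (qs n) := fun n => measurable_TT2 (hA n) (hB n) (mT1 n)
  have ifs : ∀ n, ∫⁻ x, fs n x ∂S.lam = 1 := fun n => by
    rw [← ifn n]; exact lintegral_TT (hA n) (hB n) (hB0 n) (mfn n)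
  have iqs : ∀ n, ∫⁻ z, qs n z ∂(S.lam.prod S.lam) = ∫⁻ z, qn n z ∂(S.lam.prod S.lam) :=
    fun n => (lintegral_TT2 (hA n) (hB n) (hB0 n) (mT1 n)).trans
      (lintegral_TT1 (hA n) (hB n) (hB0 n) (mqn n))
  have fsne : ∀ n x, fs n x ≠ 0 ↔ x ∈ {x | δ n ≤ S.r x} := by
    intro n x
    rw [mem_ofPred_eq, ← hH]
    constructor
    · intro h
      by_contra hc
      push Not at hc
      exact h (TT_mem_diff hc.1 hc.2)
    · exact TT_pos (hA n) (hBA n) hN (hNA n) (hBne n) (mfn n) (fun x _ => fn0 n x)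
  have qsne : ∀ n z, qs n z ≠ 0 ↔ z.1 ∈ {x | δ n ≤ S.r x} ∧ z.2 ∈ {x | δ n ≤ S.r x} := by
    intro n z
    rw [mem_ofPred_eq, mem_ofPred_eq, ← hH, ← hH]
    exact TT12_ne_zero_iff (hA n) (hB n) (hBA n) hN (hNA n) (hBne n) (mqn n)
      (fun z _ => qn0 n z) z
  have evA : ∀ x, 0 < S.r x → ∀ᶠ n in atTop, x ∉ A n := by
    intro x hx
    filter_upwards [hδl.eventually_lt_const (half_pos hx)] with n hn
    simp only [A, mem_ofPred_eq, not_lt]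
    linarith
  have lfs : ∀ᵐ x ∂S.lam, Tendsto (fun n => fs n x) atTop (𝓝 (f x)) := by
    filter_upwards [lfn, ae_r_pos S] with x hx hr
    refine hx.congr' ?_
    filter_upwards [evA x hr] with n hn
    exact (TT_notMem (hBA n) hn).symm
  have qmp1 := Measure.quasiMeasurePreserving_fst (μ := S.lam) (ν := S.lam)
  have qmp2 := Measure.quasiMeasurePreserving_snd (μ := S.lam) (ν := S.lam)
  have lqs : ∀ᵐ z ∂(S.lam.prod S.lam), Tendsto (fun n => qs n z) atTop (𝓝 (q z)) := by
    filter_upwards [qmp1.ae (ae_r_pos S), qmp2.ae (ae_r_pos S)] with z hr1 hr2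
    refine (lqnp z).congr' ?_
    filter_upwards [evA _ hr1, evA _ hr2] with n hn1 hn2
    simp only [qs]
    unfold TT2
    rw [TT_notMem (hBA n) hn2]
    unfold TT1
    rw [TT_notMem (hBA n) hn1]
  have liqs : Tendsto (fun n => ∫⁻ z, qs n z ∂(S.lam.prod S.lam)) atTop
        (𝓝 (∫⁻ z, q z ∂(S.lam.prod S.lam))) := by simpa only [iqs] using lqn
  have rates : ∀ n, S.rateI0 (S.lam.withDensity (fs n))
        ((S.lam.prod S.lam).withDensity (qs n)) =
        ∫⁻ z, PhiE (qs n z) (fs n z.1 * wgt S z) ∂(S.lam.prod S.lam) := by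
    intro n
    refine rate_eq S (mfs n) ?_ (mqs n) (by rw [iqs]; exact iqn n) ?_ ?_
    · filter_upwards [ae_lt_top (mfs n) (by rw [ifs]; simp)] with x hx using hx.ne
    · exact marginals_TT (hA n) (hB n) (hB0 n) (mqn n) (hmn n)
    · refine ae_of_all _ fun z hz => ?_
      by_contra hne
      have h1 := ((qsne n z).1 hne).1
      rcases mul_eq_zero.1 hz with h | h
      · exact (fsne n z.1).2 h1 h
      · exact wgt_ne_zero S (lt_of_lt_of_le (hδ n) h1) h
  have rate0 : S.rateI0 (S.lam.withDensity f) ((S.lam.prod S.lam).withDensity q) =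
        ∫⁻ z, PhiE (q z) (f z.1 * wgt S z) ∂(S.lam.prod S.lam) := by
    refine rate_eq S hf ?_ hq hqi hmarg hac
    filter_upwards [ae_lt_top hf (by rw [hf1]; simp)] with x hx using hx.ne
  refine ⟨fs, qs, mfs, mqs, ifs, fun n => by rw [iqs]; exact iqn n, ?_, lfs, lqs, liqs, ?_⟩
  · intro n
    refine ⟨?_, msupp_prod_eq (mfs n) (mqs n) (fsne n) (qsne n),
      withDensity_absolutelyContinuous _ _, withDensity_absolutelyContinuous _ _⟩
    refine (msupp_subset_of (mfs n) (isClosed_le continuous_const S.r_cont) (fsne n)).trans ?_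
    intro x hx h0
    have h0 : S.r x = 0 := h0
    have hx : δ n ≤ S.r x := hx
    have := hδ n
    linarith
  · simp only [rates, rate0]
    refine tendsto_of_le_liminf_of_limsup_le ?_ ?_
    · refine le_trans (lintegral_mono_ae ?_) (lintegral_liminf_le fun n =>
        measurable_PhiE (mqs n) (((mfs n).comp measurable_fst).mul hw))
      filter_upwards [lqs, qmp1.ae lfs, ae_lt_top hq hqi,
        qmp1.ae (ae_lt_top hf (by rw [hf1]; simp))] with z g1 g2 g3 g4
      have hwt : wgt S z ≠ ∞ := ENNReal.ofReal_ne_top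
      exact PhiE_le_liminf g1 (ENNReal.Tendsto.mul_const g2 (Or.inr hwt)) g3.ne
        (ENNReal.mul_ne_top g4.ne hwt)
    · set L := ENNReal.ofReal (Real.log (2 * (pM / pm) * ((pM / pm) * max 1 C.toReal)))
      set W := ENNReal.ofReal (R * pM)
      let s : ℕ → Set (E × E) := fun n => ((A n)ᶜ ×ˢ (A n)ᶜ)ᶜ
      have hs : ∀ n, MeasurableSet (s n) := fun n => ((hA n).compl.prod (hA n).compl).compl
      have hsl : ∀ᵐ z ∂(S.lam.prod S.lam), ∀ᶠ n in atTop, z ∉ s n := by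
        filter_upwards [qmp1.ae (ae_r_pos S), qmp2.ae (ae_r_pos S)] with z hr1 hr2
        filter_upwards [evA _ hr1, evA _ hr2] with n hn1 hn2
        simp only [s, mem_compl_iff, not_not, mem_prod]
        exact ⟨hn1, hn2⟩
      have t1 := strip_tendsto hq mqs hqi lqs liqs hs hsl
      have mf1 : ∀ {g : E → ℝ≥0∞}, Measurable g → Measurable fun z : E × E => g z.1 :=
        fun hg => hg.comp measurable_fst
      have if1 : ∀ {g : E → ℝ≥0∞}, Measurable g → ∫⁻ x, g x ∂S.lam = 1 →
          ∫⁻ z : E × E, g z.1 ∂(S.lam.prod S.lam) = 1 := by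
        intro g hg h
        rw [lintegral_prod _ (mf1 hg).aemeasurable]
        simpa using h
      have t2 := strip_tendsto (ν := S.lam.prod S.lam) (u := fun z => f z.1)
        (un := fun n z => fs n z.1) (mf1 hf)
        (fun n => mf1 (mfs n)) (by rw [if1 hf hf1]; simp) (qmp1.ae lfs)
        (by simp only [if1 hf hf1, if1 (mfs _) (ifs _)]; exact tendsto_const_nhds) hs hsl
      have t3 : Tendsto (fun n => c n + (L * ∫⁻ z in s n, qs n z ∂(S.lam.prod S.lam) +
          W * ∫⁻ z in s n, fs n z.1 ∂(S.lam.prod S.lam))) atTop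
          (𝓝 (∫⁻ z, PhiE (q z) (f z.1 * wgt S z) ∂(S.lam.prod S.lam))) := by
        have := hc.add ((ENNReal.Tendsto.const_mul t1 (Or.inr (ENNReal.ofReal_ne_top :
          L ≠ ∞))).add (ENNReal.Tendsto.const_mul t2 (Or.inr (ENNReal.ofReal_ne_top : W ≠ ∞))))
        simpa using this
      rw [← t3.limsup_eq]
      refine limsup_le_limsup (Eventually.of_forall fun n => ?_)
      obtain ⟨k1, k2⟩ := hyp_sets S (hδ n) hC (hiv n) hpm h1 h2
      have hmax : 1 ≤ max 1 C.toReal := le_max_left _ _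
      refine (onestep (hA n) (hB n) (hBA n) hN (hNA n) (hBne n) (hB0 n) (mfn n) (mqn n) hw
        (W := W) ENNReal.ofReal_ne_top ?_ (fun x _ => fn0 n x) (qn0 n) ?_ (by rw [ifn n]; simp)
        (iqn n) (by linarith) (by nlinarith) k1 k2).trans ?_
      · intro z
        refine ENNReal.ofReal_le_ofReal ?_
        have := S.p_pos z.1 z.2
        exact mul_le_mul (h3 _) (h2 _ _) this.le hR
      · intro z hz
        exact wgt_ne_zero S (lt_of_le_of_ne (S.r_nonneg _) (Ne.symm hz))
      · exact add_le_add (hcn n) le_rfl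

end main2

variable {E : Type*} [MeasurableSpace E] [TopologicalSpace E] [PolishSpace E]
  [CompactSpace E] [BorelSpace E] [Nonempty E]

/-- **Lemma 5.6**: the set `M₂` is `I`-dense in `M₃`. -/
theorem M2_Idense_in_M3 (S : ChainSetting E) (hiv : S.CondIV)
    (μ : Measure E) (hμ : IsProbabilityMeasure μ)
    (Q : Measure (E × E)) (hQ : IsFiniteMeasure Q)
    (hmem : S.MemM3 μ Q)
    (hfin : S.rateI0 μ Q ≠ ∞) :
    ∃ (μs : ℕ → Measure E) (Qs : ℕ → Measure (E × E)),
      (∀ n, IsProbabilityMeasure (μs n)) ∧ (∀ n, IsFiniteMeasure (Qs n)) ∧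
      (∀ n, S.MemM2 (μs n) (Qs n)) ∧
      Tendsto (fun n => ((toPM (μs n), toFM (Qs n)) :
          ProbabilityMeasure E × FiniteMeasure (E × E)))
        atTop (𝓝 (toPM μ, toFM Q)) ∧
      Tendsto (fun n => S.rateI0 (μs n) (Qs n)) atTop (𝓝 (S.rateI0 μ Q)) := by
  have hprob := S.lam_prob
  have eμ : S.lam.withDensity (μ.rnDeriv S.lam) = μ := Measure.withDensity_rnDeriv_eq _ _ hmem.1
  have eQ : (S.lam.prod S.lam).withDensity (Q.rnDeriv (S.lam.prod S.lam)) = Q :=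
    Measure.withDensity_rnDeriv_eq _ _ hmem.2
  have hf : Measurable (μ.rnDeriv S.lam) := Measure.measurable_rnDeriv _ _
  have hq : Measurable (Q.rnDeriv (S.lam.prod S.lam)) := Measure.measurable_rnDeriv _ _
  generalize μ.rnDeriv S.lam = f at eμ hf
  generalize Q.rnDeriv (S.lam.prod S.lam) = q at eQ hq
  subst eμ
  subst eQ
  have hf1 : ∫⁻ x, f x ∂S.lam = 1 := by
    have := measure_univ (μ := S.lam.withDensity f)
    rwa [withDensity_apply _ MeasurableSet.univ, Measure.restrict_univ] at this
  have hqi : ∫⁻ z, q z ∂(S.lam.prod S.lam) ≠ ∞ := by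
    have := measure_ne_top ((S.lam.prod S.lam).withDensity q) univ
    rwa [withDensity_apply _ MeasurableSet.univ, Measure.restrict_univ] at this
  have hcond : ((S.lam.prod S.lam).withDensity q).fst = ((S.lam.prod S.lam).withDensity q).snd ∧
      (S.lam.prod S.lam).withDensity q ≪ S.muc (S.lam.withDensity f) := by
    by_contra h
    exact hfin (if_neg h)
  have hmarg := (fst_eq_snd_iff hq hqi).1 hcond.1
  have hac : ∀ᵐ z ∂(S.lam.prod S.lam), f z.1 * wgt S z = 0 → q z = 0 := by
    have hm : Measurable fun z : E × E => f z.1 * wgt S z :=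
      (hf.comp measurable_fst).mul (measurable_wgt S)
    have h2 := hcond.2
    rw [muc_eq S hf] at h2
    have h3 : (S.lam.prod S.lam).withDensity q {z | f z.1 * wgt S z = 0} = 0 := by
      apply h2
      change (S.lam.prod S.lam).withDensity (fun z => f z.1 * wgt S z) _ = 0
      rw [withDensity_apply_eq_zero hm]
      convert measure_empty (μ := S.lam.prod S.lam)
      ext z
      simp only [mem_inter_iff, mem_ofPred_eq, mem_empty_iff_false, iff_false, not_and, not_not]
      intro h h'
      exact h h'
    rw [withDensity_apply_eq_zero hq, measure_eq_zero_iff_ae_notMem] at h3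
    filter_upwards [h3] with z hz h0
    by_contra hne
    exact hz ⟨hne, h0⟩
  obtain ⟨fs, qs, mfs, mqs, ifs, iqs, hM2, lfs, lqs, liqs, hrate⟩ :=
    core S hiv hf hq hf1 hqi hmarg hac
  have hpn : ∀ n, IsProbabilityMeasure (S.lam.withDensity (fs n)) := fun n =>
    ⟨by rw [withDensity_apply _ MeasurableSet.univ, Measure.restrict_univ, ifs]⟩
  have hfn : ∀ n, IsFiniteMeasure ((S.lam.prod S.lam).withDensity (qs n)) := fun n =>
    isFiniteMeasure_withDensity (iqs n)
  refine ⟨fun n => S.lam.withDensity (fs n), fun n => (S.lam.prod S.lam).withDensity (qs n),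
    hpn, hfn, hM2, ?_, hrate⟩
  refine Tendsto.prodMk_nhds ?_ ?_
  · refine toPM_tendsto hf mfs (by rw [hf1]; simp) lfs ?_ hμ hpn
    simp only [ifs, hf1]
    exact tendsto_const_nhds
  · exact toFM_tendsto hq mqs hqi lqs liqs hQ hfn

end
end

section
/- The set M₃ is I-dense in M₄: for every (μ,Q) ∈ M₄ with I(μ,Q) < +∞ there exists a sequence {(μ_n,Q_n)} ⊂ M₃ such that (μ_n,Q_n) → (μ,Q) and I(μ_n,Q_n) → I(μ,Q). -/
open MeasureTheory ProbabilityTheory Filter Topology Set ENNReal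

noncomputable section

/-- Membership in the set `M₄` of (5.10): `μ ⊥ λ` and `Q = 0`. -/
def ChainSetting.MemM4 {E : Type*} [MeasurableSpace E] [TopologicalSpace E]
    (S : ChainSetting E) (μ : Measure E) (Q : Measure (E × E)) : Prop :=
  μ ⟂ₘ S.lam ∧ Q = 0

section Helpers

theorem rateI0_zero_aux {E : Type*} [MeasurableSpace E] [TopologicalSpace E] [PolishSpace E]
    [BorelSpace E] (S : ChainSetting E) (μ : Measure E) [IsProbabilityMeasure μ] :
    S.rateI0 μ 0 = ∫⁻ x, ENNReal.ofReal (S.r x) ∂μ := by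
  have := S.lam_prob
  unfold ChainSetting.rateI0
  rw [if_pos ⟨by simp [Measure.fst, Measure.snd], Measure.AbsolutelyContinuous.zero _⟩]
  have h1 : ∀ z, PsiE ((0 : E × E → ℝ≥0∞) z) = 1 := by
    intro z; simp [PsiE]
  have h2 : ∫⁻ z, PsiE ((0 : Measure (E × E)).rnDeriv (S.muc μ) z) ∂(S.muc μ)
      = ∫⁻ z, 1 ∂(S.muc μ) := by
    apply lintegral_congr_ae
    filter_upwards [Measure.rnDeriv_zero (S.muc μ)] with z hz
    rw [hz, h1]
  rw [h2, lintegral_one]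
  have hpm : Measurable fun z : E × E => S.p z.1 z.2 := S.p_cont.measurable
  have hrm : Measurable S.r := S.r_cont.measurable
  unfold ChainSetting.muc
  rw [withDensity_apply _ MeasurableSet.univ, Measure.restrict_univ,
    lintegral_prod _ (by fun_prop)]
  apply lintegral_congr
  intro x
  have hpx : Measurable fun y => S.p x y := hpm.comp measurable_prodMk_left
  have h3 : ∫⁻ y, ENNReal.ofReal (S.p x y) ∂S.lam = 1 := by
    rw [← ofReal_integral_eq_lintegral_ofReal, S.p_int, ENNReal.ofReal_one]
    · by_contra h
      have := S.p_int x
      rw [integral_undef h] at this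
      norm_num at this
    · exact Eventually.of_forall fun y => (S.p_pos x y).le
  simp only [ENNReal.ofReal_mul (S.r_nonneg x)]
  rw [lintegral_const_mul _ (by fun_prop), h3, mul_one]

def avgK {E : Type*} [MeasurableSpace E] [PseudoMetricSpace E] (l : Measure E) (ε : ℝ) (x : E) :
    Measure E := (l (Metric.ball x ε))⁻¹ • l.restrict (Metric.ball x ε)

theorem avgK_measurable {E : Type*} [MeasurableSpace E] [PseudoMetricSpace E]
    [SecondCountableTopology E] [BorelSpace E] (l : Measure E) [IsFiniteMeasure l] (ε : ℝ) :
    Measurable (avgK l ε) := by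
  have hop : MeasurableSet {z : E × E | dist z.2 z.1 < ε} :=
    (isOpen_lt (by fun_prop) (by fun_prop)).measurableSet
  refine Measure.measurable_of_measurable_coe _ fun s hs => ?_
  have h1 : Measurable fun x => l (Metric.ball x ε) :=
    measurable_measure_prodMk_left (ν := l) hop
  have h2 : Measurable fun x => l (s ∩ Metric.ball x ε) :=
    measurable_measure_prodMk_left (ν := l) ((measurable_snd hs).inter hop)
  have : (fun x => avgK l ε x s) = fun x => (l (Metric.ball x ε))⁻¹ * l (s ∩ Metric.ball x ε) := by
    ext x
    simp [avgK, Measure.restrict_apply hs]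
  rw [this]
  exact h1.inv.mul h2

theorem avgK_prob {E : Type*} [MeasurableSpace E] [PseudoMetricSpace E]
    (l : Measure E) [IsFiniteMeasure l]
    (hl : ∀ U : Set E, IsOpen U → U.Nonempty → 0 < l U) {ε : ℝ} (hε : 0 < ε) (x : E) :
    IsProbabilityMeasure (avgK l ε x) := by
  constructor
  have := hl _ Metric.isOpen_ball ⟨x, Metric.mem_ball_self hε⟩
  simp only [avgK, Measure.smul_apply, Measure.restrict_apply_univ, smul_eq_mul]
  exact ENNReal.inv_mul_cancel this.ne' (measure_ne_top _ _)

theorem avgK_tendsto {E : Type*} [MeasurableSpace E] [PseudoMetricSpace E] [BorelSpace E]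
    (l : Measure E) [IsFiniteMeasure l]
    (hl : ∀ U : Set E, IsOpen U → U.Nonempty → 0 < l U) (ε : ℕ → ℝ) (hε : ∀ n, 0 < ε n)
    (hε0 : Tendsto ε atTop (𝓝 0)) (f : E → ℝ≥0∞) (hf : Continuous f) (x : E) :
    Tendsto (fun n => ∫⁻ y, f y ∂(avgK l (ε n) x)) atTop (𝓝 (f x)) := by
  have hae : ∀ n, ∀ᵐ y ∂(avgK l (ε n) x), y ∈ Metric.ball x (ε n) := fun n =>
    Measure.ae_smul_measure (ae_restrict_mem Metric.isOpen_ball.measurableSet) _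
  have hP := fun n => avgK_prob l hl (hε n) x
  rw [tendsto_order]
  have key : ∀ P : E → Prop, (∀ᶠ y in 𝓝 x, P y) →
      ∀ᶠ n in atTop, ∀ᵐ y ∂(avgK l (ε n) x), P y := by
    intro P h
    obtain ⟨δ, hδ, hb⟩ := Metric.eventually_nhds_iff_ball.1 h
    filter_upwards [hε0.eventually (gt_mem_nhds hδ)] with n hn
    filter_upwards [hae n] with y hy
    exact hb y (Metric.ball_subset_ball hn.le hy)
  constructor
  · intro a ha
    obtain ⟨b, hab, hb⟩ := exists_between ha
    filter_upwards [key _ (hf.continuousAt.eventually (lt_mem_nhds hb))] with n hn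
    have := hP n
    calc a < b := hab
      _ = ∫⁻ y, b ∂(avgK l (ε n) x) := by simp
      _ ≤ _ := lintegral_mono_ae (hn.mono fun y hy => hy.le)
  · intro a ha
    obtain ⟨b, hb, hab⟩ := exists_between ha
    filter_upwards [key _ (hf.continuousAt.eventually (gt_mem_nhds hb))] with n hn
    have := hP n
    calc _ ≤ ∫⁻ y, b ∂(avgK l (ε n) x) := lintegral_mono_ae (hn.mono fun y hy => hy.le)
      _ = b := by simp
      _ < a := hab

theorem exists_approx {E : Type*} [MeasurableSpace E] [TopologicalSpace E] [PolishSpace E]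
    [BorelSpace E] (l : Measure E) [IsFiniteMeasure l]
    (hl : ∀ U : Set E, IsOpen U → U.Nonempty → 0 < l U) (μ : Measure E) [IsProbabilityMeasure μ] :
    ∃ μs : ℕ → Measure E, (∀ n, IsProbabilityMeasure (μs n)) ∧ (∀ n, μs n ≪ l) ∧
      ∀ f : BoundedContinuousFunction E NNReal,
        Tendsto (fun n => ∫⁻ x, (f x : ℝ≥0∞) ∂(μs n)) atTop (𝓝 (∫⁻ x, (f x : ℝ≥0∞) ∂μ)) := by
  letI := TopologicalSpace.upgradeIsCompletelyMetrizable E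
  let ε : ℕ → ℝ := fun n => 1 / ((n : ℝ) + 1)
  have hε : ∀ n, 0 < ε n := fun n => by positivity
  have hε0 : Tendsto ε atTop (𝓝 0) := tendsto_one_div_add_atTop_nhds_zero_nat
  have hm := fun n => avgK_measurable l (ε n)
  have hP := fun n x => avgK_prob l hl (hε n) x
  refine ⟨fun n => μ.bind (avgK l (ε n)), fun n => ⟨?_⟩, fun n => ?_, fun f => ?_⟩
  · rw [Measure.bind_apply MeasurableSet.univ (hm n).aemeasurable]
    have : ∀ x, avgK l (ε n) x univ = 1 := fun x => (hP n x).measure_univ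
    simp [this]
  · refine Measure.AbsolutelyContinuous.mk fun s hs h0 => ?_
    rw [Measure.bind_apply hs (hm n).aemeasurable]
    have : ∀ x, avgK l (ε n) x s = 0 := fun x => by
      simp [avgK, Measure.restrict_apply hs, measure_mono_null inter_subset_left h0]
    simp [this]
  · have hfc : Continuous fun x => (f x : ℝ≥0∞) := ENNReal.continuous_coe.comp f.continuous
    have : ∀ n, ∫⁻ x, (f x : ℝ≥0∞) ∂(μ.bind (avgK l (ε n)))
        = ∫⁻ x, ∫⁻ y, (f y : ℝ≥0∞) ∂(avgK l (ε n) x) ∂μ := fun n =>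
      Measure.lintegral_bind (hm n).aemeasurable hfc.measurable.aemeasurable
    simp only [this]
    refine tendsto_lintegral_of_dominated_convergence (fun _ => (nndist f 0 : ℝ≥0∞))
      (fun n => (Measure.measurable_lintegral hfc.measurable).comp (hm n)) (fun n => ?_) (by simp) ?_
    · refine Eventually.of_forall fun x => ?_
      have := hP n x
      calc _ ≤ ∫⁻ y, (nndist f 0 : ℝ≥0∞) ∂(avgK l (ε n) x) := lintegral_mono fun y => by
            have := BoundedContinuousFunction.NNReal.upper_bound f y
            exact ENNReal.coe_le_coe.2 this
        _ = _ := by simp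
    · exact Eventually.of_forall fun x => avgK_tendsto l hl ε hε hε0 _ hfc x

end Helpers

variable {E : Type*} [MeasurableSpace E] [TopologicalSpace E] [PolishSpace E]
  [CompactSpace E] [BorelSpace E] [Nonempty E]

/-- **Lemma 5.7**: the set `M₃` is `I`-dense in `M₄`. -/
theorem M3_Idense_in_M4 (S : ChainSetting E)
    (μ : Measure E) (hμ : IsProbabilityMeasure μ)
    (Q : Measure (E × E)) (hQ : IsFiniteMeasure Q)
    (hmem : S.MemM4 μ Q)
    (hfin : S.rateI0 μ Q ≠ ∞) :
    ∃ (μs : ℕ → Measure E) (Qs : ℕ → Measure (E × E)),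
      (∀ n, IsProbabilityMeasure (μs n)) ∧ (∀ n, IsFiniteMeasure (Qs n)) ∧
      (∀ n, S.MemM3 (μs n) (Qs n)) ∧
      Tendsto (fun n => ((toPM (μs n), toFM (Qs n)) :
          ProbabilityMeasure E × FiniteMeasure (E × E)))
        atTop (𝓝 (toPM μ, toFM Q)) ∧
      Tendsto (fun n => S.rateI0 (μs n) (Qs n)) atTop (𝓝 (S.rateI0 μ Q)) := by
  obtain ⟨-, rfl⟩ := hmem
  have := S.lam_prob
  obtain ⟨μs, hp, hac, hlim⟩ := exists_approx S.lam S.lam_pos μ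
  refine ⟨μs, fun _ => 0, hp, fun _ => inferInstance,
    fun n => ⟨hac n, Measure.AbsolutelyContinuous.zero _⟩, ?_, ?_⟩
  · refine Tendsto.prodMk_nhds ?_ tendsto_const_nhds
    have h1 : ∀ n, toPM (μs n) = ⟨μs n, hp n⟩ := fun n => dif_pos (hp n)
    have h2 : toPM μ = ⟨μ, hμ⟩ := dif_pos hμ
    have k1 : ∀ n, (toPM (μs n) : Measure E) = μs n := fun n => by rw [h1]; rfl
    have k2 : (toPM μ : Measure E) = μ := by rw [h2]; rfl
    refine ProbabilityMeasure.tendsto_iff_forall_lintegral_tendsto.2 fun f => ?_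
    simp only [k1, k2]
    exact hlim f
  · have h := hlim (BoundedContinuousFunction.mkOfCompact
      ⟨fun x => (S.r x).toNNReal, continuous_real_toNNReal.comp S.r_cont⟩)
    have e : ∀ n, S.rateI0 (μs n) 0 = ∫⁻ x, ENNReal.ofReal (S.r x) ∂(μs n) := fun n => by
      have := hp n
      exact rateI0_zero_aux S (μs n)
    simp only [e, rateI0_zero_aux S μ]
    exact h

end
end

section
/- Let Q^π(dx,dy) := π(dx)c(x,dy). Then Q^π has equal first and second marginals and I(π,Q^π) = 0; if ν is any probability on E supported on a subset of E₀ then I(ν,0) = 0; and the zero level set of I consists exactly of the convex combinations α(π,Q^π) + (1−α)(ν,0), α ∈ [0,1], with ν a probability supported on a subset of E₀. -/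
open MeasureTheory ProbabilityTheory Filter Topology Set ENNReal

noncomputable section

variable {E : Type*} [MeasurableSpace E] [TopologicalSpace E] [PolishSpace E]
  [CompactSpace E] [BorelSpace E] [Nonempty E]

namespace ChainSetting
variable (S : ChainSetting E)

set_option linter.unusedSectionVars false
set_option linter.style.haveILetI false

lemma meas_r : Measurable fun x => ENNReal.ofReal (S.r x) :=
  S.r_cont.measurable.ennreal_ofReal

lemma meas_rinv : Measurable fun x => (ENNReal.ofReal (S.r x))⁻¹ := S.meas_r.inv

lemma meas_p : Measurable fun z : E × E => ENNReal.ofReal (S.p z.1 z.2) :=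
  S.p_cont.measurable.ennreal_ofReal

lemma cont_p_right (x : E) : Continuous fun y => S.p x y :=
  S.p_cont.comp (Continuous.prodMk_right x)

lemma cont_p_left (y : E) : Continuous fun x => S.p x y :=
  S.p_cont.comp (Continuous.prodMk_left y)

lemma int_of_cont {f : E → ℝ} (hf : Continuous f) (m : Measure E) [IsFiniteMeasure m] :
    Integrable f m :=
  hf.integrable_of_hasCompactSupport (HasCompactSupport.of_compactSpace f)

lemma lint_p (x : E) : ∫⁻ y, ENNReal.ofReal (S.p x y) ∂S.lam = 1 := by
  haveI := S.lam_prob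
  rw [← ofReal_integral_eq_lintegral_ofReal (int_of_cont (S.cont_p_right x) _)
    (ae_of_all _ fun y => (S.p_pos x y).le), S.p_int, ENNReal.ofReal_one]

lemma skel_apply (x : E) {s : Set E} (hs : MeasurableSet s) :
    S.skel x s = ∫⁻ y in s, ENNReal.ofReal (S.p x y) ∂S.lam :=
  withDensity_apply _ hs

lemma muc_fst (μ : Measure E) [IsFiniteMeasure μ] :
    (S.muc μ).fst = μ.withDensity fun x => ENNReal.ofReal (S.r x) := by
  haveI := S.lam_prob
  ext s hs
  rw [Measure.fst_apply hs, muc, withDensity_apply _ (measurable_fst hs), withDensity_apply _ hs]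
  have : (Prod.fst ⁻¹' s : Set (E × E)) = s ×ˢ univ := by ext; simp
  rw [this, ← Measure.prod_restrict, Measure.restrict_univ, lintegral_prod _ (by
    apply Measurable.aemeasurable
    exact ((S.r_cont.comp continuous_fst).mul S.p_cont).measurable.ennreal_ofReal)]
  refine lintegral_congr fun x => ?_
  simp only [ENNReal.ofReal_mul (S.r_nonneg x)]
  rw [lintegral_const_mul _ (S.cont_p_right x).measurable.ennreal_ofReal, S.lint_p, mul_one]

lemma meas_skel {s : Set E} (hs : MeasurableSet s) : Measurable fun x => S.skel x s := by
  haveI := S.lam_prob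
  simp only [S.skel_apply _ hs]
  exact S.meas_p.lintegral_prod_right'

lemma muc_snd (μ : Measure E) [IsFiniteMeasure μ] {s : Set E} (hs : MeasurableSet s) :
    (S.muc μ).snd s = ∫⁻ x, S.skel x s ∂(μ.withDensity fun x => ENNReal.ofReal (S.r x)) := by
  haveI := S.lam_prob
  rw [Measure.snd_apply hs, muc, withDensity_apply _ (measurable_snd hs),
    lintegral_withDensity_eq_lintegral_mul _ S.meas_r (S.meas_skel hs)]
  have : (Prod.snd ⁻¹' s : Set (E × E)) = univ ×ˢ s := by ext; simp
  rw [this, ← Measure.prod_restrict, Measure.restrict_univ, lintegral_prod _ (by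
    apply Measurable.aemeasurable
    exact ((S.r_cont.comp continuous_fst).mul S.p_cont).measurable.ennreal_ofReal)]
  refine lintegral_congr fun x => ?_
  simp only [ENNReal.ofReal_mul (S.r_nonneg x), Pi.mul_apply]
  rw [lintegral_const_mul _ (S.cont_p_right x).measurable.ennreal_ofReal, S.skel_apply _ hs]

def Inv (m : Measure E) : Prop :=
  ∀ s : Set E, MeasurableSet s → ∫⁻ x, S.skel x s ∂m = m s

lemma inv_density {m : Measure E} [IsFiniteMeasure m] (h : S.Inv m) :
    m = S.lam.withDensity fun y => ENNReal.ofReal (∫ x, S.p x y ∂m) := by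
  haveI := S.lam_prob
  ext s hs
  rw [← h s hs, withDensity_apply _ hs]
  simp only [S.skel_apply _ hs]
  rw [lintegral_lintegral_swap S.meas_p.aemeasurable]
  refine lintegral_congr fun y => ?_
  rw [ofReal_integral_eq_lintegral_ofReal (int_of_cont (S.cont_p_left y) _)
    (ae_of_all _ fun x => (S.p_pos x y).le)]

lemma p_bdd : ∃ C : ℝ, 0 < C ∧ ∀ x y, S.p x y ≤ C := by
  obtain ⟨z, -, hz⟩ := isCompact_univ.exists_isMaxOn (univ_nonempty (α := E × E))
    S.p_cont.continuousOn
  exact ⟨_, S.p_pos z.1 z.2, fun x y => hz (mem_univ (x, y))⟩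

lemma r_bdd : ∃ C : ℝ, 0 < C ∧ ∀ x, S.r x ≤ C := by
  obtain ⟨z, -, hz⟩ := isCompact_univ.exists_isMaxOn (univ_nonempty (α := E))
    S.r_cont.continuousOn
  exact ⟨S.r z + 1, by linarith [S.r_nonneg z], fun x => by linarith [show S.r x ≤ S.r z from hz (mem_univ x)]⟩

lemma cont_dens (m : Measure E) [IsFiniteMeasure m] : Continuous fun y => ∫ x, S.p x y ∂m := by
  obtain ⟨C, hC, hp⟩ := S.p_bdd
  refine continuous_of_dominated (bound := fun _ => C)
    (fun y => (S.cont_p_left y).aestronglyMeasurable) (fun y => ae_of_all _ fun x => ?_)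
    (integrable_const _) (ae_of_all _ fun x => S.cont_p_right x)
  rw [Real.norm_of_nonneg (S.p_pos x y).le]; exact hp x y

lemma eq_zero_of_dens {m : Measure E} [IsFiniteMeasure m] (y : E) (h : ∫ x, S.p x y ∂m = 0) :
    m = 0 := by
  rw [integral_eq_zero_iff_of_nonneg (fun x => (S.p_pos x y).le)
    (int_of_cont (S.cont_p_left y) _)] at h
  rw [← ae_eq_bot, ← Filter.eventually_false_iff_eq_bot]
  filter_upwards [h] with x hx
  exact (S.p_pos x y).ne' hx

lemma inv_unique {π₀ m : Measure E} [IsFiniteMeasure m] [IsProbabilityMeasure π₀]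
    (hπ : S.Inv π₀) (hm : S.Inv m) : ∃ t : ℝ, 0 ≤ t ∧ m = ENNReal.ofReal t • π₀ := by
  have gpos : ∀ y, 0 < ∫ x, S.p x y ∂π₀ := fun y => by
    refine lt_of_le_of_ne (integral_nonneg fun x => (S.p_pos x y).le) fun h => ?_
    exact IsProbabilityMeasure.ne_zero π₀ (S.eq_zero_of_dens y h.symm)
  have fnn : ∀ y, 0 ≤ ∫ x, S.p x y ∂m := fun y => integral_nonneg fun x => (S.p_pos x y).le
  obtain ⟨y, -, hy⟩ := isCompact_univ.exists_isMinOn (univ_nonempty (α := E))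
    ((S.cont_dens m).div (S.cont_dens π₀) fun y => (gpos y).ne').continuousOn
  set t := (∫ x, S.p x y ∂m) / ∫ x, S.p x y ∂π₀ with ht
  have t0 : 0 ≤ t := div_nonneg (fnn y) (gpos y).le
  refine ⟨t, t0, ?_⟩
  have hle : ENNReal.ofReal t • π₀ ≤ m := by
    conv_lhs => rw [S.inv_density hπ]
    conv_rhs => rw [S.inv_density hm]
    rw [← withDensity_smul _ (S.cont_dens π₀).measurable.ennreal_ofReal]
    refine withDensity_mono (ae_of_all _ fun z => ?_)
    simp only [Pi.smul_apply, smul_eq_mul]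
    rw [← ENNReal.ofReal_mul t0]
    refine ENNReal.ofReal_le_ofReal ?_
    have : t ≤ (∫ x, S.p x z ∂m) / ∫ x, S.p x z ∂π₀ := hy (mem_univ z)
    rwa [le_div_iff₀ (gpos z)] at this
  haveI : IsFiniteMeasure (ENNReal.ofReal t • π₀) := Measure.smul_finite _ ENNReal.ofReal_ne_top
  have hadd := Measure.sub_add_cancel_of_le hle
  have h0 : m - ENNReal.ofReal t • π₀ = 0 := by
    apply S.eq_zero_of_dens y
    have h1 : ∫ x, S.p x y ∂m = ∫ x, S.p x y ∂(m - ENNReal.ofReal t • π₀ + ENNReal.ofReal t • π₀) := by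
      rw [hadd]
    rw [integral_add_measure (int_of_cont (S.cont_p_left y) _) (int_of_cont (S.cont_p_left y) _),
      integral_smul_measure, ENNReal.toReal_ofReal t0, smul_eq_mul, ht,
      div_mul_cancel₀ _ (gpos y).ne'] at h1
    linarith
  rw [h0, zero_add] at hadd
  exact hadd.symm

lemma Z_ne_zero (π₀ : Measure E) [IsProbabilityMeasure π₀] :
    ∫⁻ x, (ENNReal.ofReal (S.r x))⁻¹ ∂π₀ ≠ 0 := by
  rw [Ne, lintegral_eq_zero_iff S.meas_rinv]
  intro h
  apply IsProbabilityMeasure.ne_zero π₀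
  rw [← ae_eq_bot, ← Filter.eventually_false_iff_eq_bot]
  filter_upwards [h] with x hx
  simp at hx

lemma Z_ne_top {π₀ : Measure E} [IsProbabilityMeasure π₀] (h : S.Inv π₀) :
    ∫⁻ x, (ENNReal.ofReal (S.r x))⁻¹ ∂π₀ ≠ ∞ := by
  haveI := S.lam_prob
  obtain ⟨C, hC, hp⟩ := S.p_bdd
  have hle : π₀ ≤ ENNReal.ofReal C • S.lam := by
    conv_lhs => rw [S.inv_density h]
    rw [← withDensity_const]
    refine withDensity_mono (ae_of_all _ fun y => ENNReal.ofReal_le_ofReal ?_)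
    calc ∫ x, S.p x y ∂π₀ ≤ ∫ x, C ∂π₀ :=
          integral_mono (int_of_cont (S.cont_p_left y) _) (integrable_const _) fun x => hp x y
      _ = C := by simp
  refine ne_top_of_le_ne_top ?_ (lintegral_mono' hle le_rfl)
  rw [lintegral_smul_measure]
  exact ENNReal.mul_ne_top ENNReal.ofReal_ne_top S.inv_r_int

lemma ae_pos {π₀ : Measure E} [IsProbabilityMeasure π₀] (h : S.Inv π₀) :
    ∀ᵐ x ∂π₀, ENNReal.ofReal (S.r x) ≠ 0 := by
  filter_upwards [ae_lt_top S.meas_r.inv (S.Z_ne_top h)] with x hx h0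
  simp [h0] at hx

lemma pi_prob {π₀ : Measure E} [IsProbabilityMeasure π₀] (h : S.Inv π₀) :
    IsProbabilityMeasure (S.piMeas π₀) := by
  constructor
  rw [piMeas, Measure.smul_apply, withDensity_apply _ MeasurableSet.univ, Measure.restrict_univ,
    smul_eq_mul, ENNReal.inv_mul_cancel (S.Z_ne_zero π₀) (S.Z_ne_top h)]

lemma pi_r {π₀ : Measure E} [IsProbabilityMeasure π₀] (h : S.Inv π₀) :
    (S.piMeas π₀).withDensity (fun x => ENNReal.ofReal (S.r x)) =
      (∫⁻ x, (ENNReal.ofReal (S.r x))⁻¹ ∂π₀)⁻¹ • π₀ := by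
  rw [piMeas, withDensity_smul_measure, ← withDensity_mul _ S.meas_rinv S.meas_r]
  congr 1
  conv_rhs => rw [← withDensity_one (μ := π₀)]
  refine withDensity_congr_ae ?_
  filter_upwards [S.ae_pos h] with x hx
  exact ENNReal.inv_mul_cancel hx ENNReal.ofReal_ne_top

lemma pi_marg {π₀ : Measure E} [IsProbabilityMeasure π₀] (h : S.Inv π₀) :
    (S.muc (S.piMeas π₀)).fst = (S.muc (S.piMeas π₀)).snd := by
  haveI := S.pi_prob h
  ext s hs
  rw [S.muc_snd _ hs, S.muc_fst, S.pi_r h, lintegral_smul_measure, h s hs]; rfl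

lemma muc_fin (μ : Measure E) [IsFiniteMeasure μ] : IsFiniteMeasure (S.muc μ) := by
  obtain ⟨C, hC, hr⟩ := S.r_bdd
  constructor
  rw [← Measure.fst_univ, S.muc_fst, withDensity_apply _ MeasurableSet.univ, Measure.restrict_univ]
  refine lt_of_le_of_lt (lintegral_mono fun x => ENNReal.ofReal_le_ofReal (hr x)) ?_
  rw [lintegral_const]
  exact ENNReal.mul_lt_top ENNReal.ofReal_lt_top (measure_lt_top _ _)

lemma muc_E0 (ν : Measure E) [IsFiniteMeasure ν] (h : ν S.E0ᶜ = 0) : S.muc ν = 0 := by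
  rw [← Measure.measure_univ_eq_zero, ← Measure.fst_univ, S.muc_fst,
    withDensity_apply _ MeasurableSet.univ, Measure.restrict_univ, lintegral_eq_zero_iff S.meas_r]
  have : ∀ᵐ x ∂ν, x ∈ S.E0 := h
  filter_upwards [this] with x hx
  simp [show S.r x = 0 from hx]

lemma psi_zero {a : ℝ≥0∞} : PsiE a = 0 ↔ a = 1 := by
  constructor
  · intro h
    unfold PsiE at h
    split_ifs at h with ha
    · simp at h
    rw [ENNReal.ofReal_eq_zero] at h
    have ha0 : 0 ≤ a.toReal := ENNReal.toReal_nonneg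
    have : a.toReal = 1 := by
      by_contra hne
      rcases ha0.eq_or_lt with h0 | h0
      · rw [← h0] at h; norm_num at h
      · have h1 := Real.log_lt_sub_one_of_pos (inv_pos.2 h0) (by simpa using hne)
        rw [Real.log_inv] at h1
        have h2 := mul_lt_mul_of_pos_left h1 h0
        rw [mul_sub, mul_inv_cancel₀ h0.ne'] at h2
        linarith
    rw [← ENNReal.ofReal_toReal ha, this, ENNReal.ofReal_one]
  · rintro rfl; simp [PsiE]

lemma meas_psi : Measurable PsiE := by
  unfold PsiE
  refine Measurable.ite (measurableSet_singleton _) measurable_const ?_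
  exact ((ENNReal.measurable_toReal.mul (Real.measurable_log.comp ENNReal.measurable_toReal)).sub
    ENNReal.measurable_toReal |>.add_const 1).ennreal_ofReal

lemma rate_zero (μ : Measure E) (Q : Measure (E × E)) [IsFiniteMeasure μ] [IsFiniteMeasure Q] :
    S.rateI0 μ Q = 0 ↔ Q.fst = Q.snd ∧ Q = S.muc μ := by
  haveI := S.muc_fin μ
  unfold rateI0
  constructor
  · intro h
    split_ifs at h with hc
    · refine ⟨hc.1, ?_⟩
      rw [lintegral_eq_zero_iff (show Measurable fun z => PsiE (_) from meas_psi.comp (Measure.measurable_rnDeriv _ _))] at h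
      rw [← Measure.withDensity_rnDeriv_eq _ _ hc.2]
      conv_rhs => rw [← withDensity_one (μ := S.muc μ)]
      refine withDensity_congr_ae ?_
      filter_upwards [h] with x hx
      exact psi_zero.1 hx
    · simp at h
  · rintro ⟨h1, h2⟩
    rw [if_pos ⟨h1, h2 ▸ Measure.AbsolutelyContinuous.rfl⟩, h2,
      lintegral_eq_zero_iff (show Measurable fun z => PsiE (_) from meas_psi.comp (Measure.measurable_rnDeriv _ _))]
    filter_upwards [Measure.rnDeriv_self (S.muc μ)] with x hx
    exact psi_zero.2 hx

lemma muc_add (μ ν : Measure E) [IsFiniteMeasure μ] [IsFiniteMeasure ν] :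
    S.muc (μ + ν) = S.muc μ + S.muc ν := by
  haveI := S.lam_prob
  rw [muc, Measure.add_prod, withDensity_add_measure]; rfl

lemma muc_smul (c : ℝ≥0∞) (μ : Measure E) [IsFiniteMeasure μ] :
    S.muc (c • μ) = c • S.muc μ := by
  haveI := S.lam_prob
  rw [muc, Measure.prod_smul_left, withDensity_smul_measure]; rfl

lemma muc_comb (π ν : Measure E) [IsProbabilityMeasure π] {α : ℝ} (hν : ν S.E0ᶜ = 0)
    (h : α = 1 ∨ IsProbabilityMeasure ν) :
    S.muc (ENNReal.ofReal α • π + ENNReal.ofReal (1 - α) • ν) = ENNReal.ofReal α • S.muc π := by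
  rcases h with rfl | h
  · simp
  · haveI : IsFiniteMeasure (ENNReal.ofReal α • π) := Measure.smul_finite _ ENNReal.ofReal_ne_top
    haveI : IsFiniteMeasure (ENNReal.ofReal (1 - α) • ν) :=
      Measure.smul_finite _ ENNReal.ofReal_ne_top
    rw [muc_add, muc_smul, muc_smul, S.muc_E0 ν hν, smul_zero, add_zero]

lemma meas_E0 : MeasurableSet S.E0 := S.r_cont.measurable (measurableSet_singleton 0)

lemma decomp {π₀ μ : Measure E} [IsProbabilityMeasure π₀] [IsProbabilityMeasure μ]
    (h : S.Inv π₀) (hm : (S.muc μ).fst = (S.muc μ).snd) :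
    ∃ α : ℝ, 0 ≤ α ∧ α ≤ 1 ∧ ∃ ν : Measure E, ν S.E0ᶜ = 0 ∧
          (α = 1 ∨ IsProbabilityMeasure ν) ∧
          μ = ENNReal.ofReal α • S.piMeas π₀ + ENNReal.ofReal (1 - α) • ν := by
  haveI := S.pi_prob h
  set m := μ.withDensity fun x => ENNReal.ofReal (S.r x) with hmdef
  have hfst : (S.muc μ).fst = m := S.muc_fst μ
  haveI : IsFiniteMeasure m := by
    haveI := S.muc_fin μ
    rw [← hfst]; infer_instance
  have hinv : S.Inv m := fun s hs => by
    rw [← S.muc_snd μ hs, ← hm, hfst]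
  obtain ⟨t, t0, ht⟩ := S.inv_unique h hinv
  set Z := ∫⁻ x, (ENNReal.ofReal (S.r x))⁻¹ ∂π₀ with hZ
  have hZ0 := S.Z_ne_zero π₀
  have hZt := S.Z_ne_top h
  have hres : μ.restrict S.E0ᶜ = (ENNReal.ofReal t * Z) • S.piMeas π₀ := by
    have e1 : m.withDensity (fun x => (ENNReal.ofReal (S.r x))⁻¹) = μ.restrict S.E0ᶜ := by
      rw [hmdef, ← withDensity_mul _ S.meas_r S.meas_rinv,
        ← withDensity_indicator_one S.meas_E0.compl]
      congr 1
      ext x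
      by_cases hx : S.r x = 0
      · have : x ∉ S.E0ᶜ := by simpa [E0] using hx
        simp [this, hx]
      · have : x ∈ S.E0ᶜ := hx
        rw [indicator_of_mem this]
        exact ENNReal.mul_inv_cancel
          (by simpa using lt_of_le_of_ne (S.r_nonneg x) (Ne.symm hx)) ENNReal.ofReal_ne_top
    rw [← e1, ht, withDensity_smul_measure, piMeas, smul_smul, mul_assoc,
      ENNReal.mul_inv_cancel hZ0 hZt, mul_one]
  have hmass : μ S.E0ᶜ = ENNReal.ofReal t * Z := by
    have := congrArg (fun κ : Measure E => κ univ) hres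
    simpa using this
  rw [← hmass] at hres
  have hdec : μ = μ.restrict S.E0ᶜ + μ.restrict S.E0 := by
    rw [add_comm, Measure.restrict_add_restrict_compl S.meas_E0]
  have hα : ENNReal.ofReal (μ.real S.E0ᶜ) = μ S.E0ᶜ := ofReal_measureReal
  have hβ : ENNReal.ofReal (1 - μ.real S.E0ᶜ) = μ S.E0 := by
    rw [probReal_compl_eq_one_sub S.meas_E0, _root_.sub_sub_cancel, ofReal_measureReal]
  refine ⟨μ.real S.E0ᶜ, measureReal_nonneg, measureReal_le_one,
    (μ S.E0)⁻¹ • μ.restrict S.E0, ?_, ?_, ?_⟩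
  · simp [Measure.restrict_apply S.meas_E0.compl]
  · by_cases h0 : μ S.E0 = 0
    · left
      rw [probReal_compl_eq_one_sub S.meas_E0, measureReal_def, h0]; simp
    · right
      constructor
      simp [ENNReal.inv_mul_cancel h0 (measure_ne_top _ _)]
  · rw [hα, hβ, ← hres, smul_smul]
    by_cases h0 : μ S.E0 = 0
    · conv_lhs => rw [hdec]
      rw [h0, zero_mul, zero_smul, Measure.restrict_eq_zero.2 h0]
    · rw [ENNReal.mul_inv_cancel h0 (measure_ne_top _ _), one_smul]
      exact hdec

end ChainSetting

/-- The zero level set of the rate function `I`: with `Q^π(dx,dy) = π(dx)c(x,dy)` one has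
`Q^π` with equal marginals and `I(π,Q^π) = 0`; any probability `ν` supported on a subset of
`E₀` satisfies `I(ν,0) = 0`; and the zeros of `I` are exactly the convex combinations
`α(π,Q^π) + (1-α)(ν,0)`, `α ∈ [0,1]`, with `ν` a probability supported on a subset of
`E₀`. -/
theorem rateI_zero_level_set (S : ChainSetting E)
    (π₀ : Measure E) (hπ₀ : IsProbabilityMeasure π₀)
    (hπ₀inv : ∀ s : Set E, MeasurableSet s → ∫⁻ x, S.skel x s ∂π₀ = π₀ s) :
    (S.muc (S.piMeas π₀)).fst = (S.muc (S.piMeas π₀)).snd ∧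
    S.rateI0 (S.piMeas π₀) (S.muc (S.piMeas π₀)) = 0 ∧
    (∀ ν : Measure E, IsProbabilityMeasure ν → ν S.E0ᶜ = 0 → S.rateI0 ν 0 = 0) ∧
    (∀ (μ : Measure E) (Q : Measure (E × E)),
      IsProbabilityMeasure μ → IsFiniteMeasure Q →
      (S.rateI0 μ Q = 0 ↔
        ∃ α : ℝ, 0 ≤ α ∧ α ≤ 1 ∧ ∃ ν : Measure E, ν S.E0ᶜ = 0 ∧
          (α = 1 ∨ IsProbabilityMeasure ν) ∧
          μ = ENNReal.ofReal α • S.piMeas π₀ + ENNReal.ofReal (1 - α) • ν ∧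
          Q = ENNReal.ofReal α • S.muc (S.piMeas π₀))) := by
  haveI := hπ₀
  have hI : S.Inv π₀ := hπ₀inv
  haveI := S.pi_prob hI
  haveI := S.muc_fin (S.piMeas π₀)
  have hmarg := S.pi_marg hI
  refine ⟨hmarg, (S.rate_zero _ _).2 ⟨hmarg, rfl⟩, ?_, ?_⟩
  · intro ν hν h0
    exact (S.rate_zero ν 0).2 ⟨by simp [Measure.fst, Measure.snd], (S.muc_E0 ν h0).symm⟩
  · intro μ Q hμ hQ
    rw [S.rate_zero μ Q]
    constructor
    · rintro ⟨h1, rfl⟩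
      obtain ⟨α, a0, a1, ν, hν, hor, hdec⟩ := S.decomp hI h1
      refine ⟨α, a0, a1, ν, hν, hor, hdec, ?_⟩
      conv_lhs => rw [hdec]
      exact S.muc_comb _ ν hν hor
    · rintro ⟨α, a0, a1, ν, hν, hor, hdec, rfl⟩
      refine ⟨?_, ?_⟩
      · rw [Measure.fst, Measure.snd, Measure.map_smul, Measure.map_smul]
        exact congrArg _ hmarg
      · rw [hdec]
        exact (S.muc_comb _ ν hν hor).symm

end
end
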